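/- arXiv:1503.02862 — 2 statements merged into one kernel-verified Lean document; each statement's English description precedes it below -/
import Mathlib

section
/- With U the Poisson extension of w(x) = (1 + |x|²)^{−(n−2γ)/2} as defined in the context, one has ∫_{ℝ^{n+1}_+} y^{a+4}·|∇_x U|² dx dy = ((a+3)(5−a)/5)·∫_{ℝ^{n+1}_+} y^{a+2}·U² dx dy. -/
namespace S12

open MeasureTheory Real Set

lemma lint_of_int {α : Type*} [MeasurableSpace α] {μ : Measure α} {f : α → ℝ} {c : ℝ}
    (hf : 0 ≤ᵐ[μ] f) (h : ∫ x, f x ∂μ = c) (hc : 0 < c) :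
    ∫⁻ x, ENNReal.ofReal (f x) ∂μ = ENNReal.ofReal c := by
  have hi : Integrable f μ := .of_integral_ne_zero (by rw [h]; exact hc.ne')
  rw [← h, ofReal_integral_eq_lintegral_ofReal hi hf]

lemma nn_Ioi {f : ℝ → ℝ} (h : ∀ x, 0 < x → 0 ≤ f x) : 0 ≤ᵐ[volume.restrict (Ioi (0:ℝ))] f := by
  filter_upwards [ae_restrict_mem measurableSet_Ioi] with x hx using h x hx

lemma lint_gamma {p A : ℝ} (hp : 0 < p) (hA : 0 < A) :
    ∫⁻ t in Ioi (0:ℝ), ENNReal.ofReal (t ^ (p - 1) * exp (-(A * t)))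
      = ENNReal.ofReal (Gamma p * A ^ (-p)) := by
  have hG := Gamma_pos_of_pos hp
  refine lint_of_int (nn_Ioi fun x hx => by positivity) ?_ (by positivity)
  rw [integral_rpow_mul_exp_neg_mul_Ioi hp hA, one_div, inv_rpow hA.le, rpow_neg hA.le, mul_comm]

lemma lint_J {p A : ℝ} (hp : 0 < p) (hA : 0 < A) :
    ∫⁻ t in Ioi (0:ℝ), ENNReal.ofReal (t ^ (-p - 1) * exp (-A / t))
      = ENNReal.ofReal (Gamma p * A ^ (-p)) := by
  have hG := Gamma_pos_of_pos hp
  refine lint_of_int (nn_Ioi fun x hx => by positivity) ?_ (by positivity)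
  have h1 := integral_rpow_mul_exp_neg_mul_Ioi hp hA
  rw [one_div, inv_rpow hA.le, ← rpow_neg hA.le, mul_comm] at h1
  rw [← h1, ← integral_comp_rpow_Ioi (fun t : ℝ => t ^ (p - 1) * exp (-(A * t)))
    (p := -1) (by norm_num)]
  refine setIntegral_congr_fun measurableSet_Ioi fun x hx => ?_
  have hx : 0 < x := hx
  simp only [smul_eq_mul, abs_neg, abs_one, one_mul]
  rw [← rpow_mul hx.le, ← mul_assoc, ← rpow_add hx, rpow_neg_one]
  congr 2
  all_goals ring

lemma lint_y {q B : ℝ} (hq : 0 < q) (hB : 0 < B) :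
    ∫⁻ y in Ioi (0:ℝ), ENNReal.ofReal (y ^ (2 * q - 1) * exp (-(B * y ^ 2)))
      = ENNReal.ofReal (Gamma q / 2 * B ^ (-q)) := by
  have hG := Gamma_pos_of_pos hq
  refine lint_of_int (nn_Ioi fun x hx => by positivity) ?_ (by positivity)
  have h1 := integral_rpow_mul_exp_neg_mul_rpow (p := 2) (q := 2 * q - 1) (b := B)
    two_pos (by linarith) hB
  have e : (2 * q - 1 + 1) / 2 = q := by ring
  rw [e, neg_div, e] at h1
  rw [show Gamma q / 2 * B ^ (-q) = B ^ (-q) * (1 / 2) * Gamma q by ring, ← h1]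
  refine setIntegral_congr_fun measurableSet_Ioi fun x hx => ?_
  simp

lemma lint_x (n : ℕ) (hn : 0 < n) {j b : ℝ} (hj : 0 ≤ j) (hb : 0 < b) :
    ∫⁻ x : EuclideanSpace ℝ (Fin n), ENNReal.ofReal ((‖x‖ ^ 2) ^ j * exp (-(b * ‖x‖ ^ 2)))
      = ENNReal.ofReal (n * volume.real (Metric.ball (0 : EuclideanSpace ℝ (Fin n)) 1)
          * (Gamma (n / 2 + j) / 2) * b ^ (-((n:ℝ) / 2 + j))) := by
  have : Nonempty (Fin n) := ⟨⟨0, hn⟩⟩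
  have hn' : (0:ℝ) < n := by exact_mod_cast hn
  have hG : 0 < Gamma ((n:ℝ) / 2 + j) := Gamma_pos_of_pos (by positivity)
  have hv : 0 < volume.real (Metric.ball (0 : EuclideanSpace ℝ (Fin n)) 1) := by
    rw [measureReal_def]
    exact ENNReal.toReal_pos (Metric.measure_ball_pos _ _ one_pos).ne' measure_ball_lt_top.ne
  refine lint_of_int (.of_forall fun x => by positivity) ?_ (by positivity)
  rw [integral_fun_norm_addHaar volume (fun r : ℝ => (r ^ 2) ^ j * exp (-(b * r ^ 2)))]
  simp only [finrank_euclideanSpace, Fintype.card_fin, nsmul_eq_mul, smul_eq_mul]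
  rw [mul_assoc, mul_assoc]
  congr 2
  have h1 := integral_rpow_mul_exp_neg_mul_rpow (p := 2) (q := 2 * ((n:ℝ)/2 + j) - 1) (b := b)
    two_pos (by linarith) hb
  have e : (2 * ((n:ℝ)/2 + j) - 1 + 1) / 2 = (n:ℝ)/2 + j := by ring
  rw [e, neg_div, e] at h1
  rw [show ∀ X Y : ℝ, X / 2 * Y = Y * (1 / 2) * X by intros; ring, ← h1]
  refine setIntegral_congr_fun measurableSet_Ioi fun x hx => ?_
  have hx : 0 < x := hx
  simp only [rpow_two, neg_mul]
  rw [← mul_assoc, ← rpow_natCast x (n-1), ← rpow_natCast x 2, ← rpow_mul hx.le, ← rpow_add hx,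
    Nat.cast_sub hn]
  congr 2
  push_cast
  ring

/-- Beta-type integral -/
lemma lint_beta {q p S : ℝ} (hq : 0 < q) (hpq : q < p) (hS : 0 < S) :
    ∫⁻ s in Ioi (0:ℝ), ENNReal.ofReal (s ^ (q - 1) * (S + s) ^ (-p))
      = ENNReal.ofReal (Gamma q * Gamma (p - q) / Gamma p * S ^ (-(p - q))) := by
  have hp : 0 < p := hq.trans hpq
  have hGp := Gamma_pos_of_pos hp
  have hGq := Gamma_pos_of_pos hq
  have hGpq := Gamma_pos_of_pos (sub_pos.2 hpq)
  have h1 : ∀ s ∈ Ioi (0:ℝ), ENNReal.ofReal (s ^ (q - 1) * (S + s) ^ (-p)) =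
      ∫⁻ u in Ioi (0:ℝ), ENNReal.ofReal ((Gamma p)⁻¹ * s ^ (q-1) * (u ^ (p - 1) * exp (-((S + s) * u)))) := by
    intro s hs
    have hs : 0 < s := hs
    simp_rw [ENNReal.ofReal_mul (show 0 ≤ (Gamma p)⁻¹ * s ^ (q-1) by positivity)]
    rw [lintegral_const_mul' _ _ ENNReal.ofReal_ne_top, lint_gamma hp (by positivity),
      ← ENNReal.ofReal_mul (by positivity)]
    congr 1
    field_simp
  rw [setLIntegral_congr_fun measurableSet_Ioi h1, lintegral_lintegral_swap (by
    apply Measurable.aemeasurable; fun_prop)]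
  have h2 : ∀ u ∈ Ioi (0:ℝ), (∫⁻ s in Ioi (0:ℝ), ENNReal.ofReal ((Gamma p)⁻¹ * s ^ (q-1) * (u ^ (p - 1) * exp (-((S + s) * u)))))
     = ENNReal.ofReal ((Gamma p)⁻¹ * Gamma q) * ENNReal.ofReal (u ^ ((p - q) - 1) * exp (-(S * u))) := by
    intro u hu
    have hu : 0 < u := hu
    have : ∀ s : ℝ, (Gamma p)⁻¹ * s ^ (q-1) * (u ^ (p - 1) * exp (-((S + s) * u)))
      = ((Gamma p)⁻¹ * u ^ (p - 1) * exp (-(S * u))) * (s ^ (q-1) * exp (-(u * s))) := by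
      intro s
      rw [show -((S + s) * u) = -(S * u) + -(u * s) by ring, exp_add]; ring
    simp_rw [this, ENNReal.ofReal_mul (show 0 ≤ ((Gamma p)⁻¹ * u ^ (p - 1) * exp (-(S * u))) by positivity)]
    rw [lintegral_const_mul' _ _ ENNReal.ofReal_ne_top, lint_gamma hq hu,
      ← ENNReal.ofReal_mul (by positivity), ← ENNReal.ofReal_mul (by positivity)]
    congr 1
    rw [show p - q - 1 = (p - 1) + -q by ring, rpow_add hu]
    ring
  rw [setLIntegral_congr_fun measurableSet_Ioi h2, lintegral_const_mul' _ _ ENNReal.ofReal_ne_top,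
    lint_gamma (sub_pos.2 hpq) hS, ← ENNReal.ofReal_mul (by positivity)]
  congr 1
  field_simp

/-- sum substitution -/
lemma lint_sum {g : ℝ → ENNReal} {f : ℝ → ENNReal} (hg : Measurable g) (hf : Measurable f) :
    ∫⁻ s in Ioi (0:ℝ), ∫⁻ t in Ioi (0:ℝ), g s * g t * f (s + t)
     = ∫⁻ r in Ioi (0:ℝ), f r * ∫⁻ s in Ioo 0 r, g s * g (r - s) := by
  have h1 : ∀ s : ℝ, ∫⁻ t in Ioi (0:ℝ), g s * g t * f (s + t)
      = ∫⁻ r, (Ioi s).indicator (fun r => g s * g (r - s) * f r) r := by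
    intro s
    rw [← lintegral_indicator measurableSet_Ioi,
      ← lintegral_add_right_eq_self ((Ioi s).indicator (fun r => g s * g (r - s) * f r)) s]
    refine lintegral_congr fun t => ?_
    by_cases h : 0 < t
    · simp [h, add_comm]
    · simp [h]
  simp_rw [h1]
  rw [← lintegral_indicator measurableSet_Ioi]
  have h2 : ∀ s : ℝ, (Ioi (0:ℝ)).indicator (fun s => ∫⁻ r, (Ioi s).indicator (fun r => g s * g (r - s) * f r) r) s
      = ∫⁻ r, ({p : ℝ × ℝ | 0 < p.1 ∧ p.1 < p.2}.indicator (fun p => g p.1 * g (p.2 - p.1) * f p.2)) (s, r) := by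
    intro s
    by_cases h : 0 < s
    · simp [h, indicator]
    · simp [h, indicator]
  simp_rw [h2]
  have hm : MeasurableSet {p : ℝ × ℝ | 0 < p.1 ∧ p.1 < p.2} :=
    (measurableSet_lt measurable_const measurable_fst).inter
      (measurableSet_lt measurable_fst measurable_snd)
  rw [lintegral_lintegral_swap (by
    apply Measurable.aemeasurable
    exact Measurable.indicator (by fun_prop) hm), ← lintegral_indicator measurableSet_Ioi]
  refine lintegral_congr fun r => ?_
  by_cases h : 0 < r
  · simp only [indicator_of_mem (mem_Ioi.2 h)]
    rw [← lintegral_const_mul _ (by fun_prop), ← lintegral_indicator measurableSet_Ioo]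
    refine lintegral_congr fun s => ?_
    simp only [indicator, mem_ofPred_eq, mem_Ioo]
    split_ifs
    · ring
    · rfl
  · simp only [indicator, mem_Ioi, h, if_false, mem_ofPred_eq]
    rw [lintegral_eq_zero_iff' ]
    · refine .of_forall fun s => ?_
      have : ¬ (0 < s ∧ s < r) := fun hh => h (hh.1.trans hh.2)
      simp [this]
    · apply Measurable.aemeasurable
      apply Measurable.ite _ (by fun_prop) measurable_const
      exact (measurableSet_lt measurable_const measurable_id).inter (measurableSet_lt measurable_id measurable_const)

lemma lint_Z0 (r : ℝ) (hr : 0 < r) :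
    ∫⁻ s in Ioo 0 r, ENNReal.ofReal (s ^ (1 + (0:ℝ))) * ENNReal.ofReal ((r - s) ^ (1 + (0:ℝ)))
      = ENNReal.ofReal (1 / 6 * r ^ (3 + 2 * (0:ℝ))) := by
  have : ∀ s ∈ Ioo 0 r, ENNReal.ofReal (s ^ (1 + (0:ℝ))) * ENNReal.ofReal ((r - s) ^ (1 + (0:ℝ)))
     = ENNReal.ofReal (s * (r - s)) := by
    intro s hs
    rw [add_zero, rpow_one, rpow_one, ENNReal.ofReal_mul hs.1.le]
  rw [setLIntegral_congr_fun measurableSet_Ioo this]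
  refine lint_of_int ?_ ?_ (by positivity)
  · filter_upwards [ae_restrict_mem measurableSet_Ioo] with s hs
    exact mul_nonneg hs.1.le (by linarith [hs.2])
  · rw [← integral_Ioc_eq_integral_Ioo, ← intervalIntegral.integral_of_le hr.le]
    have : ∀ s : ℝ, s * (r - s) = r * s - s ^ 2 := by intro s; ring
    simp_rw [this]
    rw [intervalIntegral.integral_sub (by apply Continuous.intervalIntegrable; fun_prop)
      (by apply Continuous.intervalIntegrable; fun_prop), intervalIntegral.integral_const_mul, integral_id, integral_pow]
    rw [show (3:ℝ) + 2 * 0 = (3:ℕ) by norm_num, rpow_natCast]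
    push_cast; ring

lemma lint_Z1 (r : ℝ) (hr : 0 < r) :
    ∫⁻ s in Ioo 0 r, ENNReal.ofReal (s ^ (1 + (1:ℝ))) * ENNReal.ofReal ((r - s) ^ (1 + (1:ℝ)))
      = ENNReal.ofReal (1 / 30 * r ^ (3 + 2 * (1:ℝ))) := by
  have : ∀ s ∈ Ioo 0 r, ENNReal.ofReal (s ^ (1 + (1:ℝ))) * ENNReal.ofReal ((r - s) ^ (1 + (1:ℝ)))
     = ENNReal.ofReal (s ^ 2 * (r - s) ^ 2) := by
    intro s hs
    rw [one_add_one_eq_two, rpow_two, rpow_two, ENNReal.ofReal_mul (sq_nonneg _)]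
  rw [setLIntegral_congr_fun measurableSet_Ioo this]
  refine lint_of_int (.of_forall fun s => by positivity) ?_ (by positivity)
  · rw [← integral_Ioc_eq_integral_Ioo, ← intervalIntegral.integral_of_le hr.le]
    have : ∀ s : ℝ, s ^ 2 * (r - s) ^ 2 = r ^ 2 * s ^ 2 - 2 * r * s ^ 3 + s ^ 4 := by intro s; ring
    simp_rw [this]
    rw [intervalIntegral.integral_add (by apply Continuous.intervalIntegrable; fun_prop)
      (by apply Continuous.intervalIntegrable; fun_prop), intervalIntegral.integral_sub (by apply Continuous.intervalIntegrable; fun_prop)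
      (by apply Continuous.intervalIntegrable; fun_prop), intervalIntegral.integral_const_mul, intervalIntegral.integral_const_mul, integral_pow, integral_pow, integral_pow]
    rw [show (3:ℝ) + 2 * 1 = (5:ℕ) by norm_num, rpow_natCast]
    push_cast; ring

/-- Lebesgue measure on the positive half line -/
noncomputable abbrev mu0 : Measure ℝ := volume.restrict (Ioi (0:ℝ))

noncomputable abbrev MM : Measure (ℝ × ℝ) := mu0.prod mu0

lemma ae_MM : ∀ᵐ p ∂MM, 0 < p.1 ∧ 0 < p.2 := by
  rw [MM, mu0, Measure.prod_restrict]
  filter_upwards [ae_restrict_mem (measurableSet_Ioi.prod measurableSet_Ioi)] with p hp using hp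

noncomputable def mm (γ t : ℝ) : ℝ := t ^ (γ - 1) * exp (-1 / t)

noncomputable def kk (N γ y : ℝ) (p : ℝ × ℝ) : ℝ :=
  mm γ p.1 * (p.2 ^ (-γ - 1) * exp (-y ^ 2 / p.2)) * (p.1 + p.2) ^ (-N)

noncomputable def VV (N γ j y q : ℝ) : ENNReal :=
  ∫⁻ p, ENNReal.ofReal (kk N γ y p * ((p.1 + p.2) ^ (-j) * exp (-q / (p.1 + p.2)))) ∂MM

noncomputable def QQ (N γ : ℝ) : ENNReal :=
  ∫⁻ t in Ioi (0:ℝ), ∫⁻ t' in Ioi (0:ℝ),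
    ENNReal.ofReal (mm γ t * mm γ t' * (t + t') ^ (-(N - 2 + γ)))

@[fun_prop]
lemma measurable_mm (γ : ℝ) : Measurable (mm γ) := by
  unfold mm; fun_prop

lemma mm_nonneg {γ t : ℝ} (ht : 0 < t) : 0 ≤ mm γ t := by unfold mm; positivity

lemma kk_nonneg {N γ y : ℝ} {p : ℝ × ℝ} (h1 : 0 < p.1) (h2 : 0 < p.2) : 0 ≤ kk N γ y p := by
  have := mm_nonneg (γ := γ) h1
  unfold kk; positivity

lemma swap_sq {Z Ω : Type*} [MeasurableSpace Z] [MeasurableSpace Ω] {ν : Measure Z} {M : Measure Ω}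
    [SFinite ν] [SFinite M] {c : Z → ENNReal} {f : Z → Ω → ENNReal} (hc : Measurable c)
    (hf : Measurable (Function.uncurry f)) :
    ∫⁻ z, c z * (∫⁻ p, f z p ∂M) ^ 2 ∂ν = ∫⁻ p, ∫⁻ p', ∫⁻ z, c z * (f z p * f z p') ∂ν ∂M ∂M := by
  have hf1 : ∀ z, Measurable (f z) := fun z => hf.comp measurable_prodMk_left
  have hf2 : Measurable (fun q : Z × Ω × Ω => c q.1 * (f q.1 q.2.1 * f q.1 q.2.2)) := by
    have a1 : Measurable (fun q : Z × Ω × Ω => f q.1 q.2.1) :=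
      hf.comp (g := Function.uncurry f) (f := fun q : Z × Ω × Ω => (q.1, q.2.1)) (by fun_prop)
    have a2 : Measurable (fun q : Z × Ω × Ω => f q.1 q.2.2) :=
      hf.comp (g := Function.uncurry f) (f := fun q : Z × Ω × Ω => (q.1, q.2.2)) (by fun_prop)
    exact (hc.comp measurable_fst).mul (a1.mul a2)
  have h1 : ∀ z, c z * (∫⁻ p, f z p ∂M) ^ 2
      = ∫⁻ q, c z * (f z q.1 * f z q.2) ∂(M.prod M) := by
    intro z
    have h := hf1 z
    rw [lintegral_const_mul _ (by fun_prop), lintegral_prod_mul (hf1 z).aemeasurable (hf1 z).aemeasurable, sq]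
  simp_rw [h1]
  rw [lintegral_lintegral_swap hf2.aemeasurable, lintegral_prod]
  apply Measurable.aemeasurable
  exact Measurable.lintegral_prod_right' (f := fun q : (Ω × Ω) × Z => c q.2 * (f q.2 q.1.1 * f q.2 q.1.2))
    (hf2.comp (by fun_prop : Measurable (fun q : (Ω × Ω) × Z => (q.2, q.1))))

lemma inv_add_rpow {u v q : ℝ} (hu : 0 < u) (hv : 0 < v) :
    (1 / u + 1 / v) ^ (-q) = (u + v) ^ (-q) * (u ^ q * v ^ q) := by
  have : 1 / u + 1 / v = (u + v) * (u * v)⁻¹ := by field_simp; ring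
  rw [this, mul_rpow (by positivity) (by positivity), inv_rpow (by positivity), rpow_neg (x := u * v) (by positivity),
    inv_inv, mul_rpow hu.le hv.le]

noncomputable def XX (n : ℕ) (j γ : ℝ) : ℝ :=
  Gamma (2 + j + γ) / 2 *
  (n * volume.real (Metric.ball (0 : EuclideanSpace ℝ (Fin n)) 1) * (Gamma (n / 2 + j) / 2))

lemma XX_nonneg (n : ℕ) {j γ : ℝ} (hj : 0 ≤ j) (hγ : 0 < γ) : 0 ≤ XX n j γ := by
  have h1 : 0 < Gamma (2 + j + γ) := Gamma_pos_of_pos (by positivity)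
  have h2 : 0 ≤ Gamma ((n:ℝ) / 2 + j) := Gamma_nonneg_of_nonneg (by positivity)
  unfold XX
  positivity

lemma inner_int (n : ℕ) (hn : 0 < n) {γ j : ℝ} (hj : 0 ≤ j) (hγ : 0 < γ) {p p' : ℝ × ℝ}
    (h1 : 0 < p.1) (h2 : 0 < p.2) (h1' : 0 < p'.1) (h2' : 0 < p'.2) :
    ∫⁻ z, ENNReal.ofReal (z.1 ^ (3 + 2 * j + 2 * γ) * (‖z.2‖ ^ 2) ^ j) *
      (ENNReal.ofReal (kk (n/2) γ z.1 p * ((p.1 + p.2) ^ (-j) * exp (-‖z.2‖ ^ 2 / (p.1 + p.2)))) *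
       ENNReal.ofReal (kk (n/2) γ z.1 p' * ((p'.1 + p'.2) ^ (-j) * exp (-‖z.2‖ ^ 2 / (p'.1 + p'.2)))))
      ∂(mu0.prod (volume : Measure (EuclideanSpace ℝ (Fin n))))
    = ENNReal.ofReal (XX n j γ * (mm γ p.1 * mm γ p'.1)) * (ENNReal.ofReal (p.2 ^ (1 + j)) *
      ENNReal.ofReal (p'.2 ^ (1 + j)) * ENNReal.ofReal ((p.2 + p'.2) ^ (-(2 + j + γ)) *
        (p.1 + p'.1 + (p.2 + p'.2)) ^ (-((n:ℝ)/2 + j)))) := by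
  obtain ⟨t, τ⟩ := p
  obtain ⟨t', τ'⟩ := p'
  simp only at *
  have hX := XX_nonneg n hj hγ
  have hm := mm_nonneg (γ := γ) h1
  have hm' := mm_nonneg (γ := γ) h1'
  set Kc : ℝ := mm γ t * mm γ t' * (τ ^ (-γ-1) * τ' ^ (-γ-1)) *
    (((t + τ) ^ (-((n:ℝ)/2)) * (t' + τ') ^ (-((n:ℝ)/2))) * ((t + τ) ^ (-j) * (t' + τ') ^ (-j))) with hKc
  have hK : 0 ≤ Kc := by positivity
  have key : ∀ᵐ z ∂(mu0.prod (volume : Measure (EuclideanSpace ℝ (Fin n)))), 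
      ENNReal.ofReal (z.1 ^ (3 + 2 * j + 2 * γ) * (‖z.2‖ ^ 2) ^ j) *
      (ENNReal.ofReal (kk (n/2) γ z.1 (t, τ) * ((t + τ) ^ (-j) * exp (-‖z.2‖ ^ 2 / (t + τ)))) *
       ENNReal.ofReal (kk (n/2) γ z.1 (t', τ') * ((t' + τ') ^ (-j) * exp (-‖z.2‖ ^ 2 / (t' + τ')))))
      = ENNReal.ofReal Kc * (ENNReal.ofReal (z.1 ^ (2 * (2 + j + γ) - 1) * exp (-((1/τ + 1/τ') * z.1 ^ 2))) *
        ENNReal.ofReal ((‖z.2‖ ^ 2) ^ j * exp (-((1 / (t + τ) + 1 / (t' + τ')) * ‖z.2‖ ^ 2)))) := by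
    have : ∀ᵐ z ∂(mu0.prod (volume : Measure (EuclideanSpace ℝ (Fin n)))), 0 < z.1 := by
      have h0 : ∀ᵐ y ∂mu0, 0 < y := ae_restrict_mem measurableSet_Ioi
      exact Measure.quasiMeasurePreserving_fst.ae h0
    filter_upwards [this] with z hz
    have k1 := kk_nonneg (N := n/2) (γ := γ) (y := z.1) (p := (t, τ)) h1 h2
    rw [← ENNReal.ofReal_mul (by positivity), ← ENNReal.ofReal_mul (by positivity),
      ← ENNReal.ofReal_mul (by positivity), ← ENNReal.ofReal_mul (by positivity)]
    congr 1
    rw [show -((1/τ + 1/τ') * z.1 ^ 2) = -z.1^2/τ + -z.1^2/τ' by ring, exp_add,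
      show -((1 / (t + τ) + 1 / (t' + τ')) * ‖z.2‖ ^ 2) = -‖z.2‖ ^ 2 / (t + τ) + -‖z.2‖ ^ 2 / (t' + τ') by ring,
      exp_add, show 2 * (2 + j + γ) - 1 = 3 + 2 * j + 2 * γ by ring, hKc]
    simp only [kk]
    ring
  rw [lintegral_congr_ae key, lintegral_const_mul' _ _ ENNReal.ofReal_ne_top,
    lintegral_prod_mul (f := fun y : ℝ => ENNReal.ofReal (y ^ (2 * (2 + j + γ) - 1) * exp (-((1/τ + 1/τ') * y ^ 2))))
      (g := fun x : EuclideanSpace ℝ (Fin n) => ENNReal.ofReal ((‖x‖ ^ 2) ^ j * exp (-((1 / (t + τ) + 1 / (t' + τ')) * ‖x‖ ^ 2))))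
      (by apply Measurable.aemeasurable; fun_prop) (by apply Measurable.aemeasurable; fun_prop),
    lint_y (by positivity) (by positivity), lint_x n hn hj (by positivity)]
  have g1 : 0 < Gamma (2 + j + γ) := Gamma_pos_of_pos (by positivity)
  have g2 : 0 ≤ Gamma ((n:ℝ) / 2 + j) := Gamma_nonneg_of_nonneg (by positivity)
  rw [← ENNReal.ofReal_mul (by positivity), ← ENNReal.ofReal_mul (by positivity),
      ← ENNReal.ofReal_mul (by positivity), ← ENNReal.ofReal_mul (by positivity), ← ENNReal.ofReal_mul (by positivity)]
  congr 1
  rw [inv_add_rpow h2 h2', inv_add_rpow (by positivity) (by positivity), hKc]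
  have e1 : ∀ u : ℝ, 0 < u → u ^ (-γ-1) * u ^ (2 + j + γ) = u ^ (1 + j) := by
    intro u hu; rw [← rpow_add hu]; congr 1; ring
  have e2 : ∀ u : ℝ, 0 < u → u ^ (-((n:ℝ)/2)) * u ^ (-j) * u ^ ((n:ℝ)/2 + j) = 1 := by
    intro u hu; rw [← rpow_add hu, ← rpow_add hu]; convert rpow_zero u using 2; ring
  rw [← e1 τ h2, ← e1 τ' h2', show t + t' + (τ + τ') = t + τ + (t' + τ') by ring]
  unfold XX
  have e3 := e2 (t + τ) (by positivity)
  have e4 := e2 (t' + τ') (by positivity)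
  generalize (t + τ) ^ (-((n:ℝ)/2)) = a1 at *
  generalize (t + τ) ^ (-j) = a2 at *
  generalize (t + τ) ^ ((n:ℝ)/2 + j) = a3 at *
  generalize (t' + τ') ^ (-((n:ℝ)/2)) = b1 at *
  generalize (t' + τ') ^ (-j) = b2 at *
  generalize (t' + τ') ^ ((n:ℝ)/2 + j) = b3 at *
  generalize (t + τ + (t' + τ')) ^ (-((n:ℝ)/2 + j)) = c1 at *
  trans (Gamma (2 + j + γ) / 2 * (n * volume.real (Metric.ball (0 : EuclideanSpace ℝ (Fin n)) 1) * (Gamma (n / 2 + j) / 2))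
    * (mm γ t * mm γ t') * (τ ^ (-γ - 1) * τ ^ (2 + j + γ) * (τ' ^ (-γ - 1) * τ' ^ (2 + j + γ))
    * ((τ + τ') ^ (-(2 + j + γ)) * c1))) * ((a1 * a2 * a3) * (b1 * b2 * b3))
  · ring
  · rw [e3, e4]; ring

lemma main_lint (n : ℕ) (hn : 0 < n) {γ j Z : ℝ} (hj : 0 ≤ j) (hγ : 0 < γ) (hγ1 : γ < 1)
    (hN : 2 < (n:ℝ) / 2 + γ) (hZ : 0 < Z)
    (hZ' : ∀ r : ℝ, 0 < r → ∫⁻ s in Ioo 0 r, ENNReal.ofReal (s ^ (1 + j)) * ENNReal.ofReal ((r - s) ^ (1 + j))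
      = ENNReal.ofReal (Z * r ^ (3 + 2 * j))) :
    ∫⁻ y in Ioi (0:ℝ), ∫⁻ x : EuclideanSpace ℝ (Fin n),
      ENNReal.ofReal (y ^ (3 + 2 * j + 2 * γ) * (‖x‖ ^ 2) ^ j) * (VV (n/2) γ j y (‖x‖^2)) ^ 2
    = ENNReal.ofReal (XX n j γ * (Z * (Gamma (2 + j - γ) * Gamma ((n:ℝ)/2 - 2 + γ) / Gamma (n/2 + j)))) * QQ (n/2) γ := by
  have hfm : Measurable (Function.uncurry (fun (z : ℝ × EuclideanSpace ℝ (Fin n)) (p : ℝ × ℝ) =>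
     ENNReal.ofReal (kk (n/2) γ z.1 p * ((p.1 + p.2) ^ (-j) * exp (-‖z.2‖ ^ 2 / (p.1 + p.2)))))) := by
    unfold Function.uncurry kk; fun_prop
  have hcm : Measurable (fun z : ℝ × EuclideanSpace ℝ (Fin n) =>
     ENNReal.ofReal (z.1 ^ (3 + 2 * j + 2 * γ) * (‖z.2‖ ^ 2) ^ j)) := by fun_prop
  have hX := XX_nonneg n hj hγ
  have step1 := swap_sq (ν := mu0.prod (volume : Measure (EuclideanSpace ℝ (Fin n)))) (M := MM) hcm hfm
  rw [lintegral_prod _ (by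
    apply Measurable.aemeasurable
    refine hcm.mul (Measurable.pow_const ?_ 2)
    exact Measurable.lintegral_prod_right' hfm)] at step1
  refine step1.trans ?_
  trans ∫⁻ p : ℝ × ℝ, ∫⁻ p' : ℝ × ℝ, ENNReal.ofReal (XX n j γ * (mm γ p.1 * mm γ p'.1)) * (ENNReal.ofReal (p.2 ^ (1 + j)) *
      ENNReal.ofReal (p'.2 ^ (1 + j)) * ENNReal.ofReal ((p.2 + p'.2) ^ (-(2 + j + γ)) *
        (p.1 + p'.1 + (p.2 + p'.2)) ^ (-((n:ℝ)/2 + j)))) ∂MM ∂MM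
  · refine lintegral_congr_ae ?_
    filter_upwards [ae_MM] with p hp
    refine lintegral_congr_ae ?_
    filter_upwards [ae_MM] with p' hp'
    exact inner_int n hn hj hγ hp.1 hp.2 hp'.1 hp'.2
  clear step1
  rw [lintegral_prod _ (by
    apply Measurable.aemeasurable
    apply Measurable.lintegral_prod_right'
      (f := fun q : (ℝ × ℝ) × (ℝ × ℝ) => ENNReal.ofReal (XX n j γ * (mm γ q.1.1 * mm γ q.2.1)) * (ENNReal.ofReal (q.1.2 ^ (1 + j)) *
      ENNReal.ofReal (q.2.2 ^ (1 + j)) * ENNReal.ofReal ((q.1.2 + q.2.2) ^ (-(2 + j + γ)) *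
        (q.1.1 + q.2.1 + (q.1.2 + q.2.2)) ^ (-((n:ℝ)/2 + j)))))
    fun_prop)]
  unfold QQ
  rw [← lintegral_const_mul' _ _ ENNReal.ofReal_ne_top]
  refine setLIntegral_congr_fun measurableSet_Ioi fun t ht => ?_
  have ht : 0 < t := ht
  have hmt := mm_nonneg (γ := γ) ht
  simp only
  have step4 : ∀ τ : ℝ, ∫⁻ p' : ℝ × ℝ, ENNReal.ofReal (XX n j γ * (mm γ t * mm γ p'.1)) * (ENNReal.ofReal (τ ^ (1 + j)) *
      ENNReal.ofReal (p'.2 ^ (1 + j)) * ENNReal.ofReal ((τ + p'.2) ^ (-(2 + j + γ)) *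
        (t + p'.1 + (τ + p'.2)) ^ (-((n:ℝ)/2 + j)))) ∂MM
      = ∫⁻ t' in Ioi (0:ℝ), ∫⁻ τ' in Ioi (0:ℝ), ENNReal.ofReal (XX n j γ * (mm γ t * mm γ t')) * (ENNReal.ofReal (τ ^ (1 + j)) *
      ENNReal.ofReal (τ' ^ (1 + j)) * ENNReal.ofReal ((τ + τ') ^ (-(2 + j + γ)) *
        (t + t' + (τ + τ')) ^ (-((n:ℝ)/2 + j)))) := by
    intro τ
    rw [lintegral_prod _ (by apply Measurable.aemeasurable; fun_prop)]
  simp_rw [step4]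
  rw [lintegral_lintegral_swap (by
    apply Measurable.aemeasurable
    apply Measurable.lintegral_prod_right'
      (f := fun q : (ℝ × ℝ) × ℝ => ENNReal.ofReal (XX n j γ * (mm γ t * mm γ q.1.2)) * (ENNReal.ofReal (q.1.1 ^ (1 + j)) *
      ENNReal.ofReal (q.2 ^ (1 + j)) * ENNReal.ofReal ((q.1.1 + q.2) ^ (-(2 + j + γ)) *
        (t + q.1.2 + (q.1.1 + q.2)) ^ (-((n:ℝ)/2 + j)))))
    fun_prop), ← lintegral_const_mul' _ _ ENNReal.ofReal_ne_top]
  refine setLIntegral_congr_fun measurableSet_Ioi fun t' ht' => ?_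
  have ht' : 0 < t' := ht'
  have hmt' := mm_nonneg (γ := γ) ht'
  simp_rw [lintegral_const_mul' _ _ ENNReal.ofReal_ne_top]
  rw [lint_sum (g := fun s => ENNReal.ofReal (s ^ (1 + j))) (f := fun s => ENNReal.ofReal (s ^ (-(2 + j + γ)) *
        (t + t' + s) ^ (-((n:ℝ)/2 + j)))) (by fun_prop) (by fun_prop)]
  have step5 : ∀ r ∈ Ioi (0:ℝ), ENNReal.ofReal (r ^ (-(2 + j + γ)) * (t + t' + r) ^ (-((n:ℝ)/2 + j))) *
      ∫⁻ s in Ioo 0 r, ENNReal.ofReal (s ^ (1 + j)) * ENNReal.ofReal ((r - s) ^ (1 + j))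
      = ENNReal.ofReal Z * ENNReal.ofReal (r ^ ((2 + j - γ) - 1) * (t + t' + r) ^ (-((n:ℝ)/2 + j))) := by
    intro r hr
    have hr : 0 < r := hr
    rw [hZ' r hr, ← ENNReal.ofReal_mul (by positivity), ← ENNReal.ofReal_mul (by positivity)]
    congr 1
    rw [show 2 + j - γ - 1 = -(2 + j + γ) + (3 + 2 * j) by ring, rpow_add hr (-(2 + j + γ)) (3 + 2 * j)]
    ring
  rw [setLIntegral_congr_fun measurableSet_Ioi step5, lintegral_const_mul' _ _ ENNReal.ofReal_ne_top,
    lint_beta (by linarith) (by linarith) (by positivity),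
    show (n:ℝ)/2 + j - (2 + j - γ) = n/2 - 2 + γ by ring]
  have g1 : 0 < Gamma (2 + j - γ) := Gamma_pos_of_pos (by linarith)
  have g2 : 0 < Gamma ((n:ℝ)/2 - 2 + γ) := Gamma_pos_of_pos (by linarith)
  have g3 : 0 < Gamma ((n:ℝ)/2 + j) := Gamma_pos_of_pos (by linarith)
  rw [← ENNReal.ofReal_mul (by positivity), ← ENNReal.ofReal_mul (by positivity), ← ENNReal.ofReal_mul (by positivity)]
  congr 1
  ring

lemma QQ_lt_top {N γ : ℝ} (h : 4 + 2 * γ < 2 * N) (hγ : 0 < γ) : QQ N γ < ⊤ := by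
  have he : 0 < N - 2 + γ := by linarith
  have hp : 0 < N / 2 - 1 - γ / 2 := by linarith
  have hb : ∀ t ∈ Ioi (0:ℝ), ∀ t' ∈ Ioi (0:ℝ), ENNReal.ofReal (mm γ t * mm γ t' * (t + t') ^ (-(N - 2 + γ)))
     ≤ ENNReal.ofReal (t ^ (-(N / 2 - 1 - γ / 2) - 1) * exp (-1 / t)) * ENNReal.ofReal (t' ^ (-(N / 2 - 1 - γ / 2) - 1) * exp (-1 / t')) := by
    intro t ht t' ht'
    have ht : 0 < t := ht
    have ht' : 0 < t' := ht'
    rw [← ENNReal.ofReal_mul (by positivity)]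
    apply ENNReal.ofReal_le_ofReal
    have h1 : (t + t') ^ (-(N - 2 + γ)) ≤ t ^ (-(N - 2 + γ) / 2) * t' ^ (-(N - 2 + γ) / 2) := by
      rw [← mul_rpow ht.le ht'.le]
      have : (t + t') ^ (-(N - 2 + γ)) = ((t + t') ^ 2) ^ (-(N - 2 + γ) / 2) := by
        rw [← rpow_natCast, ← rpow_mul (by positivity)]; congr 1; push_cast; ring
      rw [this]
      exact rpow_le_rpow_of_nonpos (by positivity) (by nlinarith) (by linarith)
    have e : ∀ u : ℝ, 0 < u → u ^ (-(N / 2 - 1 - γ / 2) - 1) = u ^ (γ - 1) * u ^ (-(N - 2 + γ) / 2) := by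
      intro u hu; rw [← rpow_add hu]; congr 1; ring
    rw [e t ht, e t' ht']
    have hm := mm_nonneg (γ := γ) ht
    have hm' := mm_nonneg (γ := γ) ht'
    calc _ ≤ mm γ t * mm γ t' * (t ^ (-(N - 2 + γ) / 2) * t' ^ (-(N - 2 + γ) / 2)) := by gcongr
      _ = _ := by unfold mm; ring
  unfold QQ
  calc _ ≤ ∫⁻ t in Ioi (0:ℝ), ∫⁻ t' in Ioi (0:ℝ), ENNReal.ofReal (t ^ (-(N / 2 - 1 - γ / 2) - 1) * exp (-1 / t)) * ENNReal.ofReal (t' ^ (-(N / 2 - 1 - γ / 2) - 1) * exp (-1 / t')) :=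
        setLIntegral_mono' measurableSet_Ioi fun t ht => setLIntegral_mono' measurableSet_Ioi fun t' ht' => hb t ht t' ht'
    _ < ⊤ := by
      rw [lintegral_lintegral_mul (by apply Measurable.aemeasurable; fun_prop) (by apply Measurable.aemeasurable; fun_prop),
        lint_J hp one_pos]
      exact ENNReal.mul_lt_top ENNReal.ofReal_lt_top ENNReal.ofReal_lt_top


lemma complete_sq {n : ℕ} (x ξ : EuclideanSpace ℝ (Fin n)) {t τ : ℝ} (ht : 0 < t) (hτ : 0 < τ) :
    ‖ξ‖ ^ 2 / t + ‖x - ξ‖ ^ 2 / τ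
      = (1 / t + 1 / τ) * ‖ξ - (t / (t + τ)) • x‖ ^ 2 + ‖x‖ ^ 2 / (t + τ) := by
  rw [norm_sub_sq_real, norm_sub_sq_real, inner_smul_right, norm_smul, mul_pow, norm_eq_abs, sq_abs,
    real_inner_comm ξ x]
  field_simp
  ring

lemma lint_gauss (n : ℕ) (x : EuclideanSpace ℝ (Fin n)) {t τ : ℝ} (ht : 0 < t) (hτ : 0 < τ) :
    ∫⁻ ξ : EuclideanSpace ℝ (Fin n), ENNReal.ofReal (exp (-(‖ξ‖ ^ 2 / t + ‖x - ξ‖ ^ 2 / τ)))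
      = ENNReal.ofReal (π ^ ((n:ℝ)/2) * ((t + τ) ^ (-((n:ℝ)/2)) * (t ^ ((n:ℝ)/2) * τ ^ ((n:ℝ)/2)))
          * exp (-‖x‖ ^ 2 / (t + τ))) := by
  refine lint_of_int (.of_forall fun x => by positivity) ?_ (by positivity)
  simp_rw [complete_sq x _ ht hτ, neg_add, exp_add]
  rw [integral_mul_const, integral_sub_right_eq_self
    (fun ξ : EuclideanSpace ℝ (Fin n) => exp (-((1 / t + 1 / τ) * ‖ξ‖ ^ 2)))]
  have := GaussianFourier.integral_rexp_neg_mul_sq_norm (V := EuclideanSpace ℝ (Fin n))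
    (b := 1 / t + 1 / τ) (by positivity)
  simp only [neg_mul, finrank_euclideanSpace, Fintype.card_fin] at this
  rw [this, div_rpow (by positivity) (by positivity), ← inv_add_rpow ht hτ, rpow_neg (by positivity), neg_div]
  rfl

lemma U_repr (n : ℕ) {γ y : ℝ} (hγ : 0 < γ) (hN : γ < (n:ℝ)/2) (hy : 0 < y)
    (x : EuclideanSpace ℝ (Fin n)) :
    ∫ ξ : EuclideanSpace ℝ (Fin n),
        y ^ (2*γ) * (‖x - ξ‖^2 + y^2) ^ (-(((n:ℝ) + 2*γ)/2)) * (1 + ‖ξ‖^2) ^ (-(((n:ℝ) - 2*γ)/2))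
    = (π ^ ((n:ℝ)/2) / (Gamma ((n:ℝ)/2 - γ) * Gamma ((n:ℝ)/2 + γ))) * y ^ (2 * γ) *
      (VV (n/2) γ 0 y (‖x‖^2)).toReal := by
  have g1 : 0 < Gamma ((n:ℝ)/2 - γ) := Gamma_pos_of_pos (by linarith)
  have g2 : 0 < Gamma ((n:ℝ)/2 + γ) := Gamma_pos_of_pos (by linarith)
  set c : ℝ := (Gamma ((n:ℝ)/2 - γ) * Gamma ((n:ℝ)/2 + γ))⁻¹ * y ^ (2 * γ) with hc
  have hc0 : 0 ≤ c := by positivity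
  have e0 : (π ^ ((n:ℝ)/2) / (Gamma ((n:ℝ)/2 - γ) * Gamma ((n:ℝ)/2 + γ))) * y ^ (2 * γ)
     = c * π ^ ((n:ℝ)/2) := by rw [hc]; ring
  rw [integral_eq_lintegral_of_nonneg_ae (.of_forall fun ξ => by positivity)
    (by apply Measurable.aestronglyMeasurable; fun_prop), e0]
  rw [← ENNReal.toReal_ofReal (show 0 ≤ c * π ^ ((n:ℝ)/2) by positivity), ← ENNReal.toReal_mul]
  congr 1
  have h1 : ∀ ξ : EuclideanSpace ℝ (Fin n),
      ENNReal.ofReal (y ^ (2*γ) * (‖x - ξ‖^2 + y^2) ^ (-(((n:ℝ) + 2*γ)/2)) * (1 + ‖ξ‖^2) ^ (-(((n:ℝ) - 2*γ)/2)))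
      = ∫⁻ p, ENNReal.ofReal c * (ENNReal.ofReal (p.1 ^ (-((n:ℝ)/2 - γ) - 1) * exp (-(1 + ‖ξ‖^2) / p.1)) *
         ENNReal.ofReal (p.2 ^ (-((n:ℝ)/2 + γ) - 1) * exp (-(‖x - ξ‖^2 + y^2) / p.2))) ∂MM := by
    intro ξ
    rw [lintegral_const_mul' _ _ ENNReal.ofReal_ne_top, lintegral_prod_mul
      (f := fun t : ℝ => ENNReal.ofReal (t ^ (-((n:ℝ)/2 - γ) - 1) * exp (-(1 + ‖ξ‖^2) / t)))
      (g := fun t : ℝ => ENNReal.ofReal (t ^ (-((n:ℝ)/2 + γ) - 1) * exp (-(‖x - ξ‖^2 + y^2) / t)))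
      (by apply Measurable.aemeasurable; fun_prop) (by apply Measurable.aemeasurable; fun_prop),
      lint_J (by linarith) (by positivity), lint_J (by linarith) (by positivity),
      ← ENNReal.ofReal_mul (by positivity), ← ENNReal.ofReal_mul (by positivity)]
    congr 1
    rw [hc, show ((n:ℝ) + 2*γ)/2 = n/2 + γ by ring, show ((n:ℝ) - 2*γ)/2 = n/2 - γ by ring]
    generalize Gamma ((n:ℝ)/2 - γ) = G1 at g1 ⊢
    generalize Gamma ((n:ℝ)/2 + γ) = G2 at g2 ⊢
    generalize (1 + ‖ξ‖^2) ^ (-((n:ℝ)/2 - γ)) = G3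
    generalize (‖x - ξ‖^2 + y^2) ^ (-((n:ℝ)/2 + γ)) = G4
    generalize y ^ (2 * γ) = G5
    field_simp
  simp_rw [h1]
  rw [lintegral_lintegral_swap (by apply Measurable.aemeasurable; fun_prop), VV,
    ← lintegral_const_mul' _ _ ENNReal.ofReal_ne_top]
  refine lintegral_congr_ae ?_
  filter_upwards [ae_MM] with p hp
  obtain ⟨t, τ⟩ := p
  obtain ⟨ht, hτ⟩ := hp
  simp only at ht hτ ⊢
  have h2 : ∀ ξ : EuclideanSpace ℝ (Fin n), 
      ENNReal.ofReal c * (ENNReal.ofReal (t ^ (-((n:ℝ)/2 - γ) - 1) * exp (-(1 + ‖ξ‖^2) / t)) *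
         ENNReal.ofReal (τ ^ (-((n:ℝ)/2 + γ) - 1) * exp (-(‖x - ξ‖^2 + y^2) / τ)))
      = ENNReal.ofReal (c * (t ^ (-((n:ℝ)/2 - γ) - 1) * exp (-1/t)) * (τ ^ (-((n:ℝ)/2 + γ) - 1) * exp (-y^2/τ)))
        * ENNReal.ofReal (exp (-(‖ξ‖ ^ 2 / t + ‖x - ξ‖ ^ 2 / τ))) := by
    intro ξ
    rw [← ENNReal.ofReal_mul (by positivity), ← ENNReal.ofReal_mul (by positivity), ← ENNReal.ofReal_mul (by positivity)]
    congr 1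
    rw [show -(1 + ‖ξ‖^2) / t = -1/t + -(‖ξ‖^2/t) by ring, show -(‖x - ξ‖^2 + y^2) / τ = -y^2/τ + -(‖x-ξ‖^2/τ) by ring,
      neg_add (‖ξ‖^2/t), exp_add, exp_add, exp_add]
    ring
  simp_rw [h2]
  rw [lintegral_const_mul' _ _ ENNReal.ofReal_ne_top, lint_gauss n x ht hτ,
    ← ENNReal.ofReal_mul (by positivity), ← ENNReal.ofReal_mul (by positivity)]
  congr 1
  simp only [kk, mm, neg_zero, rpow_zero]
  rw [show -((n:ℝ)/2 - γ) - 1 = (γ - 1) + -(n/2) by ring, show -((n:ℝ)/2 + γ) - 1 = (-γ-1) + -(n/2) by ring,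
    rpow_add ht, rpow_add hτ, rpow_neg ht.le, rpow_neg hτ.le]
  have a1 : 0 < t ^ ((n:ℝ)/2) := by positivity
  have a2 : 0 < τ ^ ((n:ℝ)/2) := by positivity
  field_simp

lemma kk_int {N γ y : ℝ} (hγ : 0 < γ) (hN : γ < N) (hy : 0 < y) : Integrable (kk N γ y) MM := by
  have hm : Measurable (kk N γ y) := by unfold kk; fun_prop
  refine ⟨hm.aestronglyMeasurable, ?_⟩
  rw [hasFiniteIntegral_iff_ofReal (by filter_upwards [ae_MM] with p hp using kk_nonneg hp.1 hp.2)]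
  calc _ ≤ ∫⁻ p, ENNReal.ofReal (p.1 ^ (-(N - γ) - 1) * exp (-1 / p.1)) *
         ENNReal.ofReal (p.2 ^ (-γ - 1) * exp (-y^2 / p.2)) ∂MM := by
        refine lintegral_mono_ae ?_
        filter_upwards [ae_MM] with p hp
        obtain ⟨t, τ⟩ := p
        obtain ⟨ht, hτ⟩ := hp
        simp only at ht hτ ⊢
        rw [← ENNReal.ofReal_mul (by positivity)]
        apply ENNReal.ofReal_le_ofReal
        have h1 : (t + τ) ^ (-N) ≤ t ^ (-N) :=
          rpow_le_rpow_of_nonpos ht (by linarith) (by linarith)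
        have hm := mm_nonneg (γ := γ) ht
        rw [show -(N - γ) - 1 = (γ - 1) + -N by ring, rpow_add ht]
        calc kk N γ y (t, τ) ≤ mm γ t * (τ ^ (-γ - 1) * exp (-y ^ 2 / τ)) * t ^ (-N) := by
              unfold kk; gcongr
          _ = _ := by unfold mm; ring
    _ < ⊤ := by
      rw [lintegral_prod_mul
      (f := fun t : ℝ => ENNReal.ofReal (t ^ (-(N - γ) - 1) * exp (-1 / t)))
      (g := fun t : ℝ => ENNReal.ofReal (t ^ (-γ - 1) * exp (-y^2 / t)))
      (by apply Measurable.aemeasurable; fun_prop) (by apply Measurable.aemeasurable; fun_prop),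
      lint_J (by linarith) (by positivity), lint_J (by linarith) (by positivity)]
      exact ENNReal.mul_lt_top ENNReal.ofReal_lt_top ENNReal.ofReal_lt_top

lemma VV_toReal {N γ y : ℝ} (j q : ℝ) :
    (VV N γ j y q).toReal = ∫ p, kk N γ y p * ((p.1 + p.2) ^ (-j) * exp (-q / (p.1 + p.2))) ∂MM := by
  rw [integral_eq_lintegral_of_nonneg_ae, VV]
  · filter_upwards [ae_MM] with p hp
    have := kk_nonneg (N := N) (γ := γ) (y := y) hp.1 hp.2
    have h1 := hp.1
    have h2 := hp.2
    simp only [Pi.zero_apply]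
    positivity
  · apply Measurable.aestronglyMeasurable; unfold kk; fun_prop

lemma VV_deriv {N γ y q : ℝ} (hγ : 0 < γ) (hN : γ < N) (hy : 0 < y) (hq : 0 < q) :
    HasDerivAt (fun q => (VV N γ 0 y q).toReal) (-(VV N γ 1 y q).toReal) q := by
  simp_rw [VV_toReal]
  have hm : Measurable (kk N γ y) := by unfold kk; fun_prop
  have hk := kk_int hγ hN hy
  have key := hasDerivAt_integral_of_dominated_loc_of_deriv_le (μ := MM) (x₀ := q)
    (F := fun q p => kk N γ y p * ((p.1 + p.2) ^ (-(0:ℝ)) * exp (-q / (p.1 + p.2))))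
    (F' := fun q p => -(kk N γ y p * ((p.1 + p.2) ^ (-(1:ℝ)) * exp (-q / (p.1 + p.2)))))
    (bound := fun p => kk N γ y p * (2 / q)) (s := Ioi (q / 2)) (Ioi_mem_nhds (by linarith))
    (.of_forall fun q => by apply Measurable.aestronglyMeasurable; fun_prop)
    (by
      refine hk.mono (by apply Measurable.aestronglyMeasurable; fun_prop) ?_
      filter_upwards [ae_MM] with p hp
      have h1 := hp.1
      have h2 := hp.2
      rw [norm_mul, neg_zero, rpow_zero, one_mul, norm_of_nonneg (exp_pos _).le]
      refine mul_le_of_le_one_right (norm_nonneg _) ?_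
      rw [exp_le_one_iff, neg_div]
      have : 0 < q / (p.1 + p.2) := by positivity
      linarith)
    (by apply Measurable.aestronglyMeasurable; fun_prop)
    (by
      filter_upwards [ae_MM] with p hp q' hq'
      have h1 := hp.1
      have h2 := hp.2
      have hq' : q / 2 < q' := hq'
      have hq0 : 0 < q' := by linarith
      have h3 := kk_nonneg (N := N) (γ := γ) (y := y) h1 h2
      rw [norm_neg, norm_of_nonneg (by positivity)]
      refine mul_le_mul_of_nonneg_left ?_ h3
      have hT : 0 < p.1 + p.2 := by linarith
      rw [rpow_neg_one, neg_div, exp_neg]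
      have h4 := add_one_le_exp (q' / (p.1 + p.2))
      have h5 : (q / 2) / (p.1 + p.2) ≤ exp (q' / (p.1 + p.2)) := by
        have : (q / 2) / (p.1 + p.2) ≤ q' / (p.1 + p.2) := by gcongr
        linarith
      rw [← mul_inv, show 2 / q = (q / 2)⁻¹ by field_simp]
      apply inv_anti₀ (by linarith)
      rw [div_le_iff₀ hT] at h5
      linarith)
    (hk.mul_const _)
    (by
      filter_upwards [ae_MM] with p hp q' hq'
      have h1 := hp.1
      have h2 := hp.2
      have hT : 0 < p.1 + p.2 := by linarith
      have h3 : HasDerivAt (fun q : ℝ => -q / (p.1 + p.2)) (-1 / (p.1 + p.2)) q' :=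
        ((hasDerivAt_id q').neg).div_const _
      have h4 := (h3.exp.const_mul ((p.1 + p.2) ^ (-(0:ℝ)))).const_mul (kk N γ y p)
      refine HasDerivAt.congr_deriv h4 ?_
      rw [neg_zero, rpow_zero, rpow_neg_one]
      ring)
  have := key.2
  rw [integral_neg] at this
  exact this

lemma bridge {E : Type*} [MeasurableSpace E] {ν : Measure E} [SFinite ν] {H : ℝ → E → ENNReal}
    (hH : Measurable (Function.uncurry H)) {h : ℝ → E → ℝ} {k : ℝ}
    (heq : ∀ y, 0 < y → ∀ᵐ x ∂ν, h y x = k * (H y x).toReal)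
    (hfin : ∫⁻ y in Ioi (0:ℝ), ∫⁻ x, H y x ∂ν < ⊤) :
    ∫ y in Ioi (0:ℝ), ∫ x, h y x ∂ν = k * (∫⁻ y in Ioi (0:ℝ), ∫⁻ x, H y x ∂ν).toReal := by
  have hm : Measurable fun y => ∫⁻ x, H y x ∂ν := Measurable.lintegral_prod_right' hH
  have hae := ae_lt_top hm hfin.ne
  rw [← integral_toReal hm.aemeasurable hae, ← integral_const_mul]
  refine integral_congr_ae ?_
  filter_upwards [hae, ae_restrict_mem measurableSet_Ioi] with y hy hy0
  have hmy : Measurable (H y) := hH.comp measurable_prodMk_left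
  rw [← integral_toReal hmy.aemeasurable (ae_lt_top hmy hy.ne), ← integral_const_mul]
  exact integral_congr_ae (heq y hy0)

lemma measurable_H (n : ℕ) (γ j : ℝ) : Measurable (Function.uncurry fun (y : ℝ) (x : EuclideanSpace ℝ (Fin n)) =>
    ENNReal.ofReal (y ^ (3 + 2 * j + 2 * γ) * (‖x‖ ^ 2) ^ j) * (VV (n/2) γ j y (‖x‖^2)) ^ 2) := by
  have h1 : Measurable (fun z : (ℝ × EuclideanSpace ℝ (Fin n)) × (ℝ × ℝ) =>
     ENNReal.ofReal (kk (n/2) γ z.1.1 z.2 * ((z.2.1 + z.2.2) ^ (-j) * exp (-‖z.1.2‖ ^ 2 / (z.2.1 + z.2.2))))) := by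
    unfold kk; fun_prop
  have h2 := Measurable.lintegral_prod_right' (ν := MM) h1
  have h3 : Measurable (fun z : ℝ × EuclideanSpace ℝ (Fin n) =>
     ENNReal.ofReal (z.1 ^ (3 + 2 * j + 2 * γ) * (‖z.2‖ ^ 2) ^ j)) := by fun_prop
  exact h3.mul (h2.pow_const 2)

lemma deriv_repr (n : ℕ) {γ y : ℝ} (hγ : 0 < γ) (hN : γ < (n:ℝ)/2) (hy : 0 < y) (c : ℝ)
    (x : EuclideanSpace ℝ (Fin n)) (hx : x ≠ 0) (i : Fin n) :
    deriv (fun t : ℝ => c * (VV (n/2) γ 0 y (‖x + t • EuclideanSpace.single i (1:ℝ)‖^2)).toReal) 0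
     = -(2 * c * (VV (n/2) γ 1 y (‖x‖^2)).toReal) * x i := by
  have e : ∀ t : ℝ, ‖x + t • EuclideanSpace.single i (1:ℝ)‖^2 = ‖x‖^2 + 2 * x i * t + t ^ 2 := by
    intro t
    rw [norm_add_sq_real, inner_smul_right, EuclideanSpace.inner_single_right, norm_smul, mul_pow]
    simp
    ring
  simp_rw [e]
  have h1 : HasDerivAt (fun t : ℝ => ‖x‖^2 + 2 * x i * t + t ^ 2) (2 * x i) 0 := by
    have := (((hasDerivAt_id (0:ℝ)).const_mul (2 * x i)).const_add (‖x‖^2)).add (hasDerivAt_pow 2 (0:ℝ))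
    exact this.congr_deriv (by simp)
  have h2 := VV_deriv (q := ‖x‖^2 + 2 * x i * 0 + 0 ^ 2) hγ hN hy (by
    have := norm_pos_iff.2 hx
    simp; positivity)
  have h3 := (HasDerivAt.comp (0:ℝ) h2 h1).const_mul c
  have h4 := h3.deriv
  simp only [Function.comp_def] at h4
  rw [h4]
  simp
  ring

end S12

open MeasureTheory Real in
theorem stmt_12 (γ : ℝ) (hγ : γ ∈ Set.Ioo (0:ℝ) 1) (a : ℝ) (ha : a = 1 - 2*γ)
    (n : ℕ) (hn : 4 + 2*γ < (n:ℝ))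
    (w : EuclideanSpace ℝ (Fin n) → ℝ)
    (hw : ∀ x : EuclideanSpace ℝ (Fin n), w x = (1 + ‖x‖^2) ^ (-(((n:ℝ) - 2*γ)/2)))
    (U : EuclideanSpace ℝ (Fin n) → ℝ → ℝ)
    (hU : ∀ x : EuclideanSpace ℝ (Fin n), ∀ y : ℝ,
      U x y = ∫ ξ : EuclideanSpace ℝ (Fin n),
        y ^ (2*γ) * (‖x - ξ‖^2 + y^2) ^ (-(((n:ℝ) + 2*γ)/2)) * w ξ) :
    ∫ y in Set.Ioi (0:ℝ), ∫ x : EuclideanSpace ℝ (Fin n),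
      y ^ (a+4) * (∑ i : Fin n,
        (deriv (fun t : ℝ => U (x + t • EuclideanSpace.single i 1) y) 0)^2) =
    ((a+3)*(5-a)/5) * ∫ y in Set.Ioi (0:ℝ), ∫ x : EuclideanSpace ℝ (Fin n),
      y ^ (a+2) * (U x y)^2 := by
  obtain ⟨hγ0, hγ1⟩ := hγ
  have hN : γ < (n:ℝ)/2 := by linarith
  have hn0 : 0 < n := by
    rcases Nat.eq_zero_or_pos n with h | h
    · subst h; norm_num at hn; linarith
    · exact h
  have : Nonempty (Fin n) := ⟨⟨0, hn0⟩⟩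
  have hn1 : (0:ℝ) < n := by exact_mod_cast hn0
  have g1 : 0 < Gamma ((n:ℝ)/2 - γ) := Gamma_pos_of_pos (by linarith)
  have g2 : 0 < Gamma ((n:ℝ)/2 + γ) := Gamma_pos_of_pos (by linarith)
  set c0 : ℝ := π ^ ((n:ℝ)/2) / (Gamma ((n:ℝ)/2 - γ) * Gamma ((n:ℝ)/2 + γ)) with hc0
  have hUr : ∀ y : ℝ, 0 < y → ∀ x : EuclideanSpace ℝ (Fin n),
      U x y = c0 * y ^ (2 * γ) * (S12.VV (n/2) γ 0 y (‖x‖^2)).toReal := by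
    intro y hy x
    rw [hU, ← S12.U_repr n hγ0 hN hy x]
    simp_rw [hw]
  have hQ : S12.QQ (n/2) γ < ⊤ := S12.QQ_lt_top (by linarith) hγ0
  have M0 := S12.main_lint n hn0 (j := 0) (Z := 1/6) le_rfl hγ0 hγ1 (by linarith) (by norm_num) S12.lint_Z0
  have M1 := S12.main_lint n hn0 (j := 1) (Z := 1/30) zero_le_one hγ0 hγ1 (by linarith) (by norm_num) S12.lint_Z1
  have B0 := S12.bridge (S12.measurable_H n γ 0) (k := c0 ^ 2)
    (h := fun y x => y ^ (a+2) * (U x y)^2) (ν := volume) (by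
      intro y hy
      refine .of_forall fun x => ?_
      rw [hUr y hy x, ENNReal.toReal_mul, ENNReal.toReal_ofReal (by positivity), ENNReal.toReal_pow,
        rpow_zero, show 3 + 2 * 0 + 2 * γ = (a + 2) + 2 * γ + 2 * γ by rw [ha]; ring, rpow_add hy (a + 2 + 2 * γ), rpow_add hy (a + 2) (2 * γ)]
      ring) (by rw [M0]; exact ENNReal.mul_lt_top ENNReal.ofReal_lt_top hQ)
  have B1 := S12.bridge (S12.measurable_H n γ 1) (k := 4 * c0 ^ 2)
    (h := fun y x => y ^ (a+4) * (∑ i : Fin n,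
        (deriv (fun t : ℝ => U (x + t • EuclideanSpace.single i 1) y) 0)^2)) (ν := volume) (by
      intro y hy
      have hne : ∀ᵐ x : EuclideanSpace ℝ (Fin n), x ≠ 0 := by
        rw [ae_iff]; simp
      filter_upwards [hne] with x hx
      simp_rw [hUr y hy, S12.deriv_repr n hγ0 hN hy _ x hx, mul_pow]
      rw [← Finset.mul_sum, ← EuclideanSpace.real_norm_sq_eq, ENNReal.toReal_mul, ENNReal.toReal_ofReal (by positivity), ENNReal.toReal_pow,
        rpow_one, show 3 + 2 * 1 + 2 * γ = (a + 4) + 2 * γ + 2 * γ by rw [ha]; ring, rpow_add hy (a + 4 + 2 * γ), rpow_add hy (a + 4) (2 * γ)]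
      ring) (by rw [M1]; exact ENNReal.mul_lt_top ENNReal.ofReal_lt_top hQ)
  rw [B0, B1, M0, M1, ENNReal.toReal_mul, ENNReal.toReal_mul]
  have X0 := S12.XX_nonneg n (j := 0) (γ := γ) le_rfl hγ0
  have X1 := S12.XX_nonneg n (j := 1) (γ := γ) zero_le_one hγ0
  have k1 : 0 < Gamma (2 + 0 - γ) := Gamma_pos_of_pos (by linarith)
  have k2 : 0 < Gamma (2 + 1 - γ) := Gamma_pos_of_pos (by linarith)
  have k3 : 0 < Gamma ((n:ℝ)/2 - 2 + γ) := Gamma_pos_of_pos (by linarith)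
  have k4 : 0 < Gamma ((n:ℝ)/2 + 0) := Gamma_pos_of_pos (by linarith)
  have k5 : 0 < Gamma ((n:ℝ)/2 + 1) := Gamma_pos_of_pos (by linarith)
  rw [ENNReal.toReal_ofReal (by positivity), ENNReal.toReal_ofReal (by positivity)]
  unfold S12.XX
  have r1 : Gamma (2 + 1 - γ) = (2 - γ) * Gamma (2 - γ) := by
    rw [← Gamma_add_one (by linarith)]; congr 1; ring
  have r2 : Gamma (2 + 1 + γ) = (2 + γ) * Gamma (2 + γ) := by
    rw [← Gamma_add_one (by linarith)]; congr 1; ring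
  rw [r1, r2, ha]
  simp only [add_zero] at *
  field_simp
  ring
end

section
/- With U the Poisson extension of w(x) = (1 + |x|²)^{−(n−2γ)/2} as defined in the context, one has ∫_{ℝ^{n+1}_+} y^{a+2}·x₁²·(∂_y U)² dx dy = [(3+a) / (20·n·(3−a)·(n−3))]·(5n³ − 30n² − (a² + 2a − 55)n − 2a² + 16a − 30)·∫_{ℝ^{n+1}_+} y^{a+2}·U² dx dy. -/
section Helpers
open MeasureTheory Real Set Filter Topology
open scoped ENNReal

noncomputable abbrev nuP : Measure ℝ := volume.restrict (Ioi (0:ℝ))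

lemma ae_nuP : ∀ᵐ p ∂nuP, 0 < p := ae_restrict_mem measurableSet_Ioi

lemma lint_scale {c : ℝ} (hc : 0 < c) (g : ℝ → ℝ≥0∞) :
    ∫⁻ x, g x ∂nuP = ENNReal.ofReal c * ∫⁻ x, g (c * x) ∂nuP := by
  have h1 : MeasurableEmbedding (fun x : ℝ => c * x) := (Homeomorph.mulLeft₀ c hc.ne').measurableEmbedding
  have h2 : (fun x : ℝ => c * x) ⁻¹' (Ioi 0) = Ioi 0 := by
    ext x; simp [hc]
  have h3 : Measure.map (fun x : ℝ => c * x) nuP = ENNReal.ofReal c⁻¹ • nuP := by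
    have := h1.restrict_map volume (Ioi 0)
    rw [h2, Real.map_volume_mul_left hc.ne', Measure.restrict_smul, abs_of_pos (inv_pos.2 hc)] at this
    exact this.symm
  rw [← h1.lintegral_map, h3, lintegral_smul_measure, smul_eq_mul, ← mul_assoc,
    ← ENNReal.ofReal_mul hc.le, mul_inv_cancel₀ hc.ne']
  simp

lemma dir_lint (A B : ℝ) (F : ℝ → ℝ≥0∞) (hF : Measurable F) :
    ∫⁻ p, ∫⁻ q, ENNReal.ofReal (p^(A-1)) * ENNReal.ofReal (q^(B-1)) * F (p+q) ∂nuP ∂nuP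
    = (∫⁻ v, ENNReal.ofReal (v^(B-1) * (1+v)^(-(A+B))) ∂nuP) *
      ∫⁻ r, ENNReal.ofReal (r^(A+B-1)) * F r ∂nuP := by
  have e1 : ∀ᵐ p ∂nuP, ∫⁻ q, ENNReal.ofReal (p^(A-1)) * ENNReal.ofReal (q^(B-1)) * F (p+q) ∂nuP
      = ∫⁻ v, ENNReal.ofReal (v^(B-1)) * (ENNReal.ofReal (p^(A+B-1)) * F ((1+v)*p)) ∂nuP := by
    filter_upwards [ae_nuP] with p hp
    rw [lint_scale hp, ← lintegral_const_mul' _ _ ENNReal.ofReal_ne_top]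
    apply lintegral_congr_ae
    filter_upwards [ae_nuP] with v hv
    rw [show p + p * v = (1+v)*p by ring, ← mul_assoc, ← mul_assoc, ← mul_assoc]
    congr 1
    rw [← ENNReal.ofReal_mul hp.le, ← ENNReal.ofReal_mul (by positivity),
      ← ENNReal.ofReal_mul (by positivity)]
    congr 1
    rw [Real.mul_rpow hp.le hv.le, show A+B-1 = 1 + (A-1) + (B-1) by ring, Real.rpow_add hp,
      Real.rpow_add hp, Real.rpow_one]
    ring
  rw [lintegral_congr_ae e1, lintegral_lintegral_swap (by fun_prop), ← lintegral_mul_const _ (by fun_prop)]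
  apply lintegral_congr_ae
  filter_upwards [ae_nuP] with v hv
  have hv1 : 0 < 1 + v := by linarith
  rw [lintegral_const_mul _ (by fun_prop)]
  rw [lint_scale hv1 (fun r => ENNReal.ofReal (r^(A+B-1)) * F r)]
  rw [ENNReal.ofReal_mul (by positivity), mul_assoc]
  congr 1
  rw [← lintegral_const_mul _ (by fun_prop), ← lintegral_const_mul _ (by fun_prop)]
  apply lintegral_congr_ae
  filter_upwards [ae_nuP] with p hp
  rw [← mul_assoc, ← mul_assoc]
  congr 1
  rw [← ENNReal.ofReal_mul (by positivity), ← ENNReal.ofReal_mul (by positivity)]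
  congr 1
  rw [Real.mul_rpow hv1.le hp.le, Real.rpow_sub_one hv1.ne', Real.rpow_neg hv1.le]
  have : (1+v)^(A+B) ≠ 0 := (Real.rpow_pos_of_pos hv1 _).ne'
  field_simp

lemma gam_lint {A : ℝ} (hA : 0 < A) :
    ∫⁻ r, ENNReal.ofReal (r^(A-1)) * ENNReal.ofReal (exp (-r)) ∂nuP = ENNReal.ofReal (Gamma A) := by
  rw [Gamma_eq_integral hA, ofReal_integral_eq_lintegral_ofReal (GammaIntegral_convergent hA)]
  · apply lintegral_congr_ae
    filter_upwards [ae_nuP] with p hp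
    rw [mul_comm, ← ENNReal.ofReal_mul (by positivity)]
  · filter_upwards [ae_nuP] with p hp
    positivity

lemma beta_lint {A B : ℝ} (hA : 0 < A) (hB : 0 < B) :
    ∫⁻ v, ENNReal.ofReal (v^(B-1) * (1+v)^(-(A+B))) ∂nuP
      = ENNReal.ofReal (Gamma A * Gamma B / Gamma (A+B)) := by
  have h := dir_lint A B (fun r => ENNReal.ofReal (exp (-r))) (by fun_prop)
  rw [gam_lint (by linarith)] at h
  have h2 : ∀ p q : ℝ, ENNReal.ofReal (p^(A-1)) * ENNReal.ofReal (q^(B-1)) * ENNReal.ofReal (exp (-(p+q)))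
     = (ENNReal.ofReal (p^(A-1)) * ENNReal.ofReal (exp (-p))) *
       (ENNReal.ofReal (q^(B-1)) * ENNReal.ofReal (exp (-q))) := by
    intro p q
    rw [neg_add, exp_add, ENNReal.ofReal_mul (exp_pos _).le]; ring
  simp_rw [h2] at h
  simp_rw [lintegral_const_mul' _ _ (ENNReal.mul_ne_top ENNReal.ofReal_ne_top ENNReal.ofReal_ne_top)] at h
  rw [lintegral_mul_const _ (by fun_prop), gam_lint hA, gam_lint hB] at h
  have hG := Gamma_pos_of_pos (add_pos hA hB)
  rw [ENNReal.ofReal_div_of_pos hG, ENNReal.ofReal_mul (Gamma_pos_of_pos hA).le, h,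
    ENNReal.mul_div_cancel_right (by simpa using hG) ENNReal.ofReal_ne_top]

/-- Dirichlet-type integral -/
lemma dir_int {A B s : ℝ} (hA : 0 < A) (hB : 0 < B) (hs : 0 < A + B - s) :
    Integrable (fun w : ℝ × ℝ => w.1^(A-1) * w.2^(B-1) * ((w.1+w.2)^(-s) * exp (-(w.1+w.2))))
      (nuP.prod nuP) ∧
    ∫ w, w.1^(A-1) * w.2^(B-1) * ((w.1+w.2)^(-s) * exp (-(w.1+w.2))) ∂(nuP.prod nuP)
      = Gamma A * Gamma B / Gamma (A+B) * Gamma (A+B-s) := by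
  have hae : ∀ᵐ w ∂(nuP.prod nuP), 0 < w.1 ∧ 0 < w.2 :=
    (Measure.quasiMeasurePreserving_fst.ae ae_nuP).and (Measure.quasiMeasurePreserving_snd.ae ae_nuP)
  have hnn : 0 ≤ᵐ[nuP.prod nuP] (fun w : ℝ × ℝ => w.1^(A-1) * w.2^(B-1) * ((w.1+w.2)^(-s) * exp (-(w.1+w.2)))) := by
    filter_upwards [hae] with w hw
    have := hw.1; have := hw.2
    simp only [Pi.zero_apply]; positivity
  have hm : Measurable (fun w : ℝ × ℝ => w.1^(A-1) * w.2^(B-1) * ((w.1+w.2)^(-s) * exp (-(w.1+w.2)))) := by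
    fun_prop
  have hG : 0 < Gamma A * Gamma B / Gamma (A+B) :=
    div_pos (mul_pos (Gamma_pos_of_pos hA) (Gamma_pos_of_pos hB)) (Gamma_pos_of_pos (by linarith))
  have key : ∫⁻ w, ENNReal.ofReal (w.1^(A-1) * w.2^(B-1) * ((w.1+w.2)^(-s) * exp (-(w.1+w.2)))) ∂(nuP.prod nuP)
      = ENNReal.ofReal (Gamma A * Gamma B / Gamma (A+B) * Gamma (A+B-s)) := by
    have h := dir_lint A B (fun r => ENNReal.ofReal (r^(-s) * exp (-r))) (by fun_prop)
    rw [beta_lint hA hB] at h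
    have h3 : ∫⁻ r, ENNReal.ofReal (r^(A+B-1)) * ENNReal.ofReal (r^(-s) * exp (-r)) ∂nuP
        = ENNReal.ofReal (Gamma (A+B-s)) := by
      rw [← gam_lint hs]
      apply lintegral_congr_ae
      filter_upwards [ae_nuP] with p hp
      rw [ENNReal.ofReal_mul (by positivity), ← mul_assoc, ← ENNReal.ofReal_mul (by positivity),
        ← Real.rpow_add hp]
      ring_nf
    rw [h3] at h
    rw [ENNReal.ofReal_mul hG.le, ← h, lintegral_prod _ (by fun_prop)]
    apply lintegral_congr_ae
    filter_upwards [ae_nuP] with p hp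
    apply lintegral_congr_ae
    filter_upwards [ae_nuP] with q hq
    rw [ENNReal.ofReal_mul (by positivity), ENNReal.ofReal_mul (by positivity)]
  refine ⟨⟨hm.aestronglyMeasurable, ?_⟩, ?_⟩
  · rw [hasFiniteIntegral_iff_ofReal hnn, key]; exact ENNReal.ofReal_lt_top
  · rw [integral_eq_lintegral_of_nonneg_ae hnn hm.aestronglyMeasurable, key, ENNReal.toReal_ofReal]
    exact mul_nonneg hG.le (Gamma_pos_of_pos hs).le

lemma ae_nuP2 : ∀ᵐ w ∂(nuP.prod nuP), 0 < w.1 ∧ 0 < w.2 :=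
  (Measure.quasiMeasurePreserving_fst.ae ae_nuP).and (Measure.quasiMeasurePreserving_snd.ae ae_nuP)

lemma exp_neg_le_pow {x : ℝ} (hx : 0 < x) (N : ℕ) : exp (-x) ≤ N.factorial * (x⁻¹)^N := by
  have h := pow_div_factorial_le_exp x hx.le N
  have hN : (0:ℝ) < N.factorial := by exact_mod_cast N.factorial_pos
  rw [exp_neg, inv_pow]
  rw [div_le_iff₀ hN] at h
  have hx' : 0 < x^N := by positivity
  rw [inv_le_iff_one_le_mul₀ (exp_pos x)]
  rw [mul_assoc, ← div_eq_inv_mul, ← mul_div_assoc, le_div_iff₀ hx']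
  linarith

noncomputable def phi (b z : ℝ) : ℝ := ∫ p, p^(b-1) * (exp (-p) * exp (-(z/p))) ∂nuP

lemma phi_integrable (b : ℝ) {z : ℝ} (hz : 0 < z) :
    Integrable (fun p => p^(b-1) * (exp (-p) * exp (-(z/p)))) nuP := by
  obtain ⟨N, hN⟩ := exists_nat_gt (-b)
  have h1 : Integrable (fun p => (N.factorial * (z⁻¹)^N) * (exp (-p) * p^(b+N-1))) nuP :=
    (GammaIntegral_convergent (by linarith : 0 < b + N)).const_mul _
  refine h1.mono' (by fun_prop) ?_
  filter_upwards [ae_nuP] with p hp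
  rw [Real.norm_of_nonneg (by positivity)]
  have h2 := exp_neg_le_pow (div_pos hz hp) N
  have h3 : p^(b+N-1) = p^(b-1) * p^N := by
    rw [← Real.rpow_natCast, ← Real.rpow_add hp]; ring_nf
  calc p^(b-1) * (exp (-p) * exp (-(z/p))) ≤ p^(b-1) * (exp (-p) * (N.factorial * ((z/p)⁻¹)^N)) := by
        gcongr
    _ = _ := by
        rw [h3, inv_div, div_pow, inv_pow]; field_simp

lemma phi_nonneg (b z : ℝ) : 0 ≤ phi b z := by
  apply integral_nonneg_of_ae
  filter_upwards [ae_nuP] with p hp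
  simp only [Pi.zero_apply]; positivity

lemma phi_measurable (b : ℝ) : Measurable (phi b) := by
  apply StronglyMeasurable.measurable
  apply StronglyMeasurable.integral_prod_right
    (f := fun z p => p^(b-1) * (exp (-p) * exp (-(z/p))))
  apply Measurable.stronglyMeasurable
  fun_prop

noncomputable def MM (s b c : ℝ) : ℝ :=
  Gamma s * Gamma (s+b+c) * Gamma (s+b) * Gamma (s+c) / Gamma (2*s+b+c)

/-- Fubini for nonnegative functions. -/
lemma pos_swap {X Y : Type*} [MeasurableSpace X] [MeasurableSpace Y] (μ : Measure X) (ν : Measure Y)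
    [SFinite μ] [SFinite ν] (f : X → Y → ℝ) (hf : Measurable (Function.uncurry f))
    (hnn : ∀ᵐ y ∂ν, ∀ᵐ x ∂μ, 0 ≤ f x y)
    (h2 : ∀ᵐ y ∂ν, Integrable (fun x => f x y) μ)
    (h3 : Integrable (fun y => ∫ x, f x y ∂μ) ν) :
    Integrable (Function.uncurry f) (μ.prod ν) := by
  rw [integrable_prod_iff' hf.aestronglyMeasurable]
  refine ⟨h2, h3.congr ?_⟩
  filter_upwards [hnn] with y hy
  apply integral_congr_ae
  filter_upwards [hy] with x hx
  simp [abs_of_nonneg hx]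

lemma phi_moment {s b c : ℝ} (hs : 0 < s) (hb : 0 < s + b) (hc : 0 < s + c) (hbc : 0 < s + b + c) :
    Integrable (fun z => z^(s-1) * (phi b z * phi c z)) nuP ∧
    ∫ z, z^(s-1) * (phi b z * phi c z) ∂nuP = MM s b c := by
  let f : ℝ → ℝ × ℝ → ℝ := fun z w =>
    z^(s-1) * ((w.1^(b-1) * (exp (-w.1) * exp (-(z/w.1)))) * (w.2^(c-1) * (exp (-w.2) * exp (-(z/w.2)))))
  have hf : Measurable (Function.uncurry f) := by unfold f; simp only [Function.uncurry_def]; fun_prop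
  obtain ⟨d1, d2⟩ := dir_int (A := s+b) (B := s+c) (s := s) hb hc (by linarith)
  have inner : ∀ w : ℝ × ℝ, 0 < w.1 → 0 < w.2 → Integrable (fun z => f z w) nuP ∧
      ∫ z, f z w ∂nuP = Gamma s * (w.1^(s+b-1) * w.2^(s+c-1) * ((w.1+w.2)^(-s) * exp (-(w.1+w.2)))) := by
    rintro ⟨p, q⟩ hp hq
    simp only at hp hq
    have hr : 0 < 1/p + 1/q := by positivity
    have e : (fun z => f z (p,q)) = fun z => (p^(b-1) * q^(c-1) * exp (-(p+q))) * (z^(s-1) * exp (-((1/p+1/q) * z))) := by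
      funext z
      have : exp (-((1/p+1/q) * z)) = exp (-(z/p)) * exp (-(z/q)) := by
        rw [← exp_add]; congr 1; ring
      simp only [f]
      rw [this, neg_add, exp_add]; ring
    have hi := Real.integral_rpow_mul_exp_neg_mul_Ioi hs hr
    have hi2 : Integrable (fun z => z^(s-1) * exp (-((1/p+1/q) * z))) nuP := by
      apply Integrable.of_integral_ne_zero
      rw [hi]
      have := Gamma_pos_of_pos hs
      positivity
    rw [e]
    refine ⟨hi2.const_mul _, ?_⟩
    rw [integral_const_mul, hi]
    have e1 : (1/(1/p+1/q))^s = p^s * q^s * (p+q)^(-s) := by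
      rw [show 1/(1/p+1/q) = p*q*(p+q)⁻¹ by field_simp; ring, Real.mul_rpow (by positivity) (by positivity),
        Real.mul_rpow hp.le hq.le, Real.inv_rpow (by positivity), Real.rpow_neg (by positivity)]
    simp only []
    rw [e1, show s+b-1 = s+(b-1) by ring, show s+c-1 = s+(c-1) by ring, Real.rpow_add hp, Real.rpow_add hq]
    ring
  have hI : Integrable (Function.uncurry f) (nuP.prod (nuP.prod nuP)) := by
    apply pos_swap _ _ _ hf
    · filter_upwards [ae_nuP2] with w hw
      filter_upwards [ae_nuP] with z hz
      have := hw.1; have := hw.2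
      simp only [f]; positivity
    · filter_upwards [ae_nuP2] with w hw using (inner w hw.1 hw.2).1
    · refine (d1.const_mul (Gamma s)).congr ?_
      filter_upwards [ae_nuP2] with w hw using (inner w hw.1 hw.2).2.symm
  have e3 : ∀ z, ∫ w, f z w ∂(nuP.prod nuP) = z^(s-1) * (phi b z * phi c z) := by
    intro z
    simp only [f]
    rw [integral_const_mul, integral_prod_mul (fun p => p^(b-1) * (exp (-p) * exp (-(z/p)))) (fun p => p^(c-1) * (exp (-p) * exp (-(z/p))))]
    rfl
  constructor
  · have := hI.integral_prod_left
    refine this.congr (ae_of_all _ fun z => ?_)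
    exact e3 z
  · simp_rw [← e3]
    rw [integral_integral_swap hI]
    have : ∫ w, ∫ z, f z w ∂nuP ∂(nuP.prod nuP) = ∫ w, Gamma s * (w.1^(s+b-1) * w.2^(s+c-1) * ((w.1+w.2)^(-s) * exp (-(w.1+w.2)))) ∂(nuP.prod nuP) := by
      apply integral_congr_ae
      filter_upwards [ae_nuP2] with w hw using (inner w hw.1 hw.2).2
    rw [this, integral_const_mul, d2, MM]
    rw [show s + b + (s+c) - s = s+b+c by ring, show s+b+(s+c) = 2*s+b+c by ring]
    ring

/-- scale separation -/
lemma sep {p m : ℝ} {P Q : ℝ → ℝ} (hP : Measurable P) (hQ : Measurable Q)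
    (h1 : Integrable (fun k => k^(m-(p+1)/2) * P k) nuP)
    (h2 : Integrable (fun z => z^((p+1)/2-1) * Q z) nuP) :
    Integrable (fun w : ℝ × ℝ => w.1^p * (w.2^m * (P w.2 * Q (w.2*w.1^2)))) (nuP.prod nuP) ∧
    ∫ y, ∫ k, y^p * (k^m * (P k * Q (k*y^2))) ∂nuP ∂nuP =
      (1/2) * (∫ k, k^(m-(p+1)/2) * P k ∂nuP) * ∫ z, z^((p+1)/2-1) * Q z ∂nuP := by
  let f : ℝ → ℝ → ℝ := fun y k => y^p * (k^m * (P k * Q (k*y^2)))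
  have hf : Measurable (Function.uncurry f) := by unfold f; simp only [Function.uncurry_def]; fun_prop
  have key : ∀ (R : ℝ → ℝ) (k : ℝ), 0 < k → 
      (Integrable (fun z => z^((p+1)/2-1) * R z) nuP → Integrable (fun y => y^p * R (k*y^2)) nuP) ∧
      ∫ y, y^p * R (k*y^2) ∂nuP = (1/2) * k^(-((p+1)/2)) * ∫ z, z^((p+1)/2-1) * R z ∂nuP := by
    intro R k hk
    let g : ℝ → ℝ := fun z => z^((p+1)/2-1) * R z
    have e : ∀ y ∈ Ioi (0:ℝ), (2 * y^((2:ℝ)-1)) • g (k * y^(2:ℝ)) = (2 * k^((p+1)/2-1)) * (y^p * R (k*y^2)) := by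
      intro y hy
      have hy : 0 < y := hy
      simp only [g, smul_eq_mul]
      have : y^p = y^((2:ℝ)-1) * y^(2*((p+1)/2-1)) := by
        rw [← Real.rpow_add hy]; congr 1; ring
      rw [Real.mul_rpow hk.le (by positivity), ← Real.rpow_mul hy.le, this, Real.rpow_two]
      ring
    have c0 : (2 * k^((p+1)/2-1)) ≠ 0 := by positivity
    constructor
    · intro hg
      have g1 : IntegrableOn (fun z => g (k*z)) (Ioi 0) := by
        have := (integrableOn_Ioi_comp_mul_left_iff g 0 hk)
        rw [mul_zero] at this
        exact this.2 hg
      have g2 := (integrableOn_Ioi_comp_rpow_iff (fun z => g (k*z)) (two_ne_zero)).2 g1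
      rw [abs_of_pos two_pos] at g2
      have g3 := g2.congr_fun e measurableSet_Ioi
      have g4 := g3.const_mul (2 * k^((p+1)/2-1))⁻¹
      refine g4.congr (ae_of_all _ fun y => ?_)
      simp only []
      rw [← mul_assoc, inv_mul_cancel₀ c0, one_mul]
    · have g1 := integral_comp_mul_left_Ioi g 0 hk
      rw [mul_zero] at g1
      have g2 := integral_comp_rpow_Ioi_of_pos (g := fun z => g (k*z)) two_pos
      rw [setIntegral_congr_fun measurableSet_Ioi e, integral_const_mul, g1] at g2
      have : k^(-((p+1)/2)) = (k^((p+1)/2-1))⁻¹ * k⁻¹ := by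
        rw [← Real.rpow_neg hk.le, ← Real.rpow_neg_one k, ← Real.rpow_add hk]; congr 1; ring
      rw [this]
      apply mul_left_cancel₀ c0
      rw [g2, smul_eq_mul]
      have : k^((p+1)/2-1) ≠ 0 := by positivity
      change _ = _ * (_ * ∫ x in Ioi 0, g x)
      generalize (∫ x in Ioi 0, g x) = G
      generalize k^((p+1)/2-1) = q at *
      field_simp
  have e0 : ∀ k, (fun y => f y k) = fun y => (k^m * P k) * (y^p * Q (k*y^2)) := by
    intro k; funext y; simp only [f]; ring
  have e2 : ∀ k : ℝ, 0 < k → k^(m-(p+1)/2) = k^m * k^(-((p+1)/2)) := by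
    intro k hk; rw [← Real.rpow_add hk]; rfl
  have hI : Integrable (Function.uncurry f) (nuP.prod nuP) := by
    rw [integrable_prod_iff' hf.aestronglyMeasurable]
    constructor
    · filter_upwards [ae_nuP] with k hk
      simp only [Function.uncurry_apply_pair]
      rw [e0]
      exact ((key Q k hk).1 h2).const_mul _
    · refine ((h1.norm.mul_const ((1/2) * ∫ z, z^((p+1)/2-1) * |Q z| ∂nuP))).congr ?_
      filter_upwards [ae_nuP] with k hk
      have : ∫ y, ‖Function.uncurry f (y,k)‖ ∂nuP = (k^m * |P k|) * ∫ y, y^p * |Q (k*y^2)| ∂nuP := by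
        rw [← integral_const_mul]
        apply integral_congr_ae
        filter_upwards [ae_nuP] with y hy
        have h3 : 0 < y^p := by positivity
        have h4 : 0 < k^m := by positivity
        simp only [Function.uncurry_apply_pair, f, Real.norm_eq_abs, abs_mul, abs_of_pos h3, abs_of_pos h4]
        ring
      have h5 := (key (fun z => |Q z|) k hk).2
      rw [this, h5, norm_mul, Real.norm_of_nonneg (by positivity), e2 k hk, Real.norm_eq_abs]
      ring
  refine ⟨hI, ?_⟩
  have : ∫ y, ∫ k, f y k ∂nuP ∂nuP = ∫ k, ∫ y, f y k ∂nuP ∂nuP := integral_integral_swap hI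
  simp only [f] at this
  rw [this]
  generalize hG : (∫ z, z^((p+1)/2-1) * Q z ∂nuP) = G
  rw [← integral_const_mul, ← integral_mul_const]
  apply integral_congr_ae
  filter_upwards [ae_nuP] with k hk
  have h5 := (key Q k hk).2
  have h6 := e0 k
  simp only [f] at h6
  rw [h6, integral_const_mul, h5, e2 k hk, hG]
  ring

lemma planch {X K Ω : Type*} [MeasurableSpace X] [MeasurableSpace K] [MeasurableSpace Ω]
    (α : Measure X) (β : Measure K) (μ : Measure Ω) [SFinite α] [SFinite β] [SFinite μ]
    (A : X → Ω → ℝ) (B : K → Ω → ℝ) (f g : Ω → ℝ)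
    (mA : Measurable (Function.uncurry A)) (mB : Measurable (Function.uncurry B))
    (mf : Measurable f) 
    (S : Ω → Prop) (hS : ∀ᵐ ω ∂μ, S ω)
    (hA0 : ∀ x ω, S ω → 0 ≤ A x ω) (hB0 : ∀ᵐ k ∂β, ∀ ω, S ω → 0 ≤ B k ω)
    (hAi : ∀ ω ω', S ω → S ω' → Integrable (fun x => A x ω * A x ω') α) (c : ℝ)
    (hAB : ∀ ω ω', S ω → S ω' → ∫ x, A x ω * A x ω' ∂α = c * ∫ k, B k ω * B k ω' ∂β)
    (hfg : ∀ ω, S ω → |f ω| ≤ g ω)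
    (h1 : ∀ᵐ k ∂β, Integrable (fun ω => g ω * B k ω) μ)
    (h2 : Integrable (fun k => (∫ ω, g ω * B k ω ∂μ)^2) β) :
    ∫ x, (∫ ω, f ω * A x ω ∂μ)^2 ∂α = c * ∫ k, (∫ ω, f ω * B k ω ∂μ)^2 ∂β := by
  let FA : X → Ω × Ω → ℝ := fun x w => (f w.1 * A x w.1) * (f w.2 * A x w.2)
  let FB : K → Ω × Ω → ℝ := fun x w => (f w.1 * B x w.1) * (f w.2 * B x w.2)
  have mA1 : Measurable (fun z : X × (Ω × Ω) => A z.1 z.2.1) :=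
    mA.comp (measurable_fst.prodMk (measurable_fst.comp measurable_snd))
  have mA2 : Measurable (fun z : X × (Ω × Ω) => A z.1 z.2.2) :=
    mA.comp (measurable_fst.prodMk (measurable_snd.comp measurable_snd))
  have mB1 : Measurable (fun z : K × (Ω × Ω) => B z.1 z.2.1) :=
    mB.comp (measurable_fst.prodMk (measurable_fst.comp measurable_snd))
  have mB2 : Measurable (fun z : K × (Ω × Ω) => B z.1 z.2.2) :=
    mB.comp (measurable_fst.prodMk (measurable_snd.comp measurable_snd))
  have mFA : Measurable (Function.uncurry FA) := by
    unfold FA; simp only [Function.uncurry_def]; fun_prop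
  have mFB : Measurable (Function.uncurry FB) := by
    unfold FB; simp only [Function.uncurry_def]; fun_prop
  have hS2 : ∀ᵐ w ∂(μ.prod μ), S w.1 ∧ S w.2 :=
    (Measure.quasiMeasurePreserving_fst.ae hS).and (Measure.quasiMeasurePreserving_snd.ae hS)
  have eA : ∀ x, (∫ ω, f ω * A x ω ∂μ)^2 = ∫ w, FA x w ∂(μ.prod μ) := by
    intro x
    rw [sq, ← integral_prod_mul]
  have eB : ∀ x, (∫ ω, f ω * B x ω ∂μ)^2 = ∫ w, FB x w ∂(μ.prod μ) := by
    intro x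
    rw [sq, ← integral_prod_mul]
  -- dominated pointwise integrability
  have hfB : ∀ᵐ k ∂β, Integrable (fun ω => f ω * B k ω) μ ∧
      ∫ ω, |f ω * B k ω| ∂μ ≤ ∫ ω, g ω * B k ω ∂μ := by
    filter_upwards [h1, hB0] with k hk hk0
    have hb : ∀ᵐ ω ∂μ, ‖f ω * B k ω‖ ≤ g ω * B k ω := by
      filter_upwards [hS] with ω hω
      rw [Real.norm_eq_abs, abs_mul, abs_of_nonneg (hk0 ω hω)]
      exact mul_le_mul_of_nonneg_right (hfg ω hω) (hk0 ω hω)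
    have hm : Measurable (fun ω => f ω * B k ω) :=
      mf.mul (mB.comp measurable_prodMk_left)
    have hi : Integrable (fun ω => f ω * B k ω) μ := hk.mono' hm.aestronglyMeasurable hb
    exact ⟨hi, integral_mono_ae hi.norm hk hb⟩
  have nB : ∀ x, ∫ w, ‖FB x w‖ ∂(μ.prod μ) = (∫ ω, |f ω * B x ω| ∂μ)^2 := by
    intro x
    rw [sq, ← integral_prod_mul]
    simp only [FB, norm_mul, Real.norm_eq_abs, abs_mul]
  have hIB : Integrable (Function.uncurry FB) (β.prod (μ.prod μ)) := by
    rw [integrable_prod_iff mFB.aestronglyMeasurable]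
    constructor
    · filter_upwards [hfB] with k hk
      exact hk.1.mul_prod hk.1
    · refine h2.mono' ?_ ?_
      · exact (mFB.aestronglyMeasurable.norm).integral_prod_right'
      · filter_upwards [hfB] with k hk
        simp only [Function.uncurry_apply_pair]
        rw [nB, Real.norm_of_nonneg (by positivity)]
        have : 0 ≤ ∫ ω, |f ω * B k ω| ∂μ := integral_nonneg fun ω => abs_nonneg _
        exact pow_le_pow_left₀ this hk.2 2
  have aeB : ∀ᵐ w ∂(μ.prod μ), ∫ k, ‖FB k w‖ ∂β = |f w.1 * f w.2| * ∫ k, B k w.1 * B k w.2 ∂β := by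
    filter_upwards [hS2] with w hw
    rw [← integral_const_mul]
    apply integral_congr_ae
    filter_upwards [hB0] with k hk
    simp only [FB, norm_mul, Real.norm_eq_abs, abs_mul, abs_of_nonneg (hk _ hw.1), abs_of_nonneg (hk _ hw.2)]
    ring
  have eFA : ∀ w, (fun x => FA x w) = fun x => (f w.1 * f w.2) * (A x w.1 * A x w.2) := by
    intro w; funext x; simp only [FA]; ring
  have eFB : ∀ w, (fun x => FB x w) = fun x => (f w.1 * f w.2) * (B x w.1 * B x w.2) := by
    intro w; funext x; simp only [FB]; ring
  have hIA : Integrable (Function.uncurry FA) (α.prod (μ.prod μ)) := by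
    rw [integrable_prod_iff' mFA.aestronglyMeasurable]
    constructor
    · filter_upwards [hS2] with w hw
      simp only [Function.uncurry_apply_pair]
      rw [eFA]
      exact (hAi _ _ hw.1 hw.2).const_mul _
    · have := ((integrable_prod_iff' mFB.aestronglyMeasurable).1 hIB).2
      refine (this.const_mul c).congr ?_
      filter_upwards [hS2, aeB] with w hw hwB
      simp only [Function.uncurry_apply_pair]
      rw [hwB, mul_left_comm, ← hAB _ _ hw.1 hw.2, ← integral_const_mul]
      apply integral_congr_ae (ae_of_all _ fun x => ?_)
      simp only [FA, norm_mul, Real.norm_eq_abs, abs_mul, abs_of_nonneg (hA0 x _ hw.1), abs_of_nonneg (hA0 x _ hw.2)]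
      ring
  simp_rw [eA, eB]
  rw [integral_integral_swap hIA, integral_integral_swap hIB, ← integral_const_mul]
  apply integral_congr_ae
  filter_upwards [hS2] with w hw
  rw [eFA, eFB, integral_const_mul, integral_const_mul, hAB _ _ hw.1 hw.2]
  ring

abbrev EE (n : ℕ) := EuclideanSpace ℝ (Fin n)

lemma gauss0 (n : ℕ) {b : ℝ} (hb : 0 < b) :
    ∫ x : EE n, exp (-(b * ‖x‖^2)) = (π/b)^((n:ℝ)/2) := by
  have := GaussianFourier.integral_rexp_neg_mul_sq_norm (V := EE n) hb
  simpa using this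

lemma gauss0_int (n : ℕ) {b : ℝ} (hb : 0 < b) :
    Integrable (fun x : EE n => exp (-(b * ‖x‖^2))) := by
  apply Integrable.of_integral_ne_zero
  rw [gauss0 n hb]
  have := pi_pos
  positivity

lemma gauss1d {b : ℝ} (hb : 0 < b) : ∫ x : ℝ, x^2 * exp (-(b*x^2)) = √(π/b) / (2*b) := by
  have h1 := integral_comp_abs (f := fun x => x^2 * exp (-(b*x^2)))
  simp only [sq_abs] at h1
  have h2 := integral_rpow_mul_exp_neg_mul_rpow (p := 2) (q := 2) two_pos (by norm_num) hb
  simp only [Real.rpow_two] at h2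
  have h3 : Gamma ((2+1)/2) = √π / 2 := by
    rw [show ((2:ℝ)+1)/2 = 1/2 + 1 by norm_num, Gamma_add_one (by norm_num), Gamma_one_half_eq]; ring
  rw [h1]
  have h4 : b^(-(2+1)/2 : ℝ) = 1/(b * √b) := by
    rw [show (-(2+1)/2 : ℝ) = -(1 + 1/2) by norm_num, Real.rpow_neg hb.le, Real.rpow_add hb, Real.rpow_one,
      ← Real.sqrt_eq_rpow, one_div]
  simp only [neg_mul] at h2
  rw [h2, h3, h4, Real.sqrt_div pi_pos.le]
  have : √b ≠ 0 := by positivity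
  field_simp

lemma gauss2 (n : ℕ) (i : Fin n) {b : ℝ} (hb : 0 < b) :
    ∫ x : EE n, (x i)^2 * exp (-(b * ‖x‖^2)) = (π/b)^((n:ℝ)/2) / (2*b) := by
  classical
  let f : Fin n → ℝ → ℝ := fun j t => (if j = i then t^2 else 1) * exp (-(b*t^2))
  have h1 : ∫ x : EE n, (x i)^2 * exp (-(b * ‖x‖^2)) = ∫ x : Fin n → ℝ, ∏ j, f j (x j) := by
    rw [← (PiLp.volume_preserving_ofLp (Fin n)).integral_comp (MeasurableEquiv.toLp 2 (Fin n → ℝ)).symm.measurableEmbedding]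
    apply integral_congr_ae (ae_of_all _ fun x => ?_)
    simp only [f, Finset.prod_mul_distrib, Finset.prod_ite_eq', Finset.mem_univ, if_true, ← exp_sum]
    rw [EuclideanSpace.norm_sq_eq, Finset.mul_sum, Finset.sum_neg_distrib]
    simp
  have h0 : ∀ j, ∫ t, f j t = √(π/b) * (if j = i then 1/(2*b) else 1) := by
    intro j
    by_cases h : j = i
    · simp only [f, h, if_true]; rw [gauss1d hb]; ring
    · simp only [f, h, if_false, one_mul, mul_one]
      have := integral_gaussian b
      simpa using this
  rw [h1, integral_fintype_prod_volume_eq_prod]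
  simp only [h0, Finset.prod_mul_distrib, Finset.prod_ite_eq', Finset.mem_univ, if_true, Finset.prod_const,
    Finset.card_univ, Fintype.card_fin]
  rw [Real.sqrt_eq_rpow, ← Real.rpow_natCast, ← Real.rpow_mul (by positivity)]
  ring_nf

lemma gauss2_int (n : ℕ) (i : Fin n) {b : ℝ} (hb : 0 < b) :
    Integrable (fun x : EE n => (x i)^2 * exp (-(b * ‖x‖^2))) := by
  apply Integrable.of_integral_ne_zero
  rw [gauss2 n i hb]
  have := pi_pos
  positivity

lemma gauss_conv (n : ℕ) {r s : ℝ} (hr : 0 < r) (hs : 0 < s) (x : EE n) :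
    Integrable (fun ξ : EE n => exp (-(r*‖x-ξ‖^2)) * exp (-(s*‖ξ‖^2))) ∧
    ∫ ξ : EE n, exp (-(r*‖x-ξ‖^2)) * exp (-(s*‖ξ‖^2)) =
      (π/(r+s))^((n:ℝ)/2) * exp (-(r*s/(r+s)*‖x‖^2)) := by
  have hrs : 0 < r + s := by positivity
  have e : (fun ξ : EE n => exp (-(r*‖x-ξ‖^2)) * exp (-(s*‖ξ‖^2))) =
      fun ξ => exp (-(r*s/(r+s)*‖x‖^2)) * (fun η : EE n => exp (-((r+s)*‖η‖^2))) (ξ - (r/(r+s)) • x) := by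
    funext ξ
    simp only []
    rw [← exp_add, ← exp_add]
    congr 1
    rw [norm_sub_sq_real, norm_sub_sq_real, inner_smul_right, norm_smul, mul_pow, Real.norm_eq_abs, sq_abs,
      real_inner_comm]
    field_simp
    ring
  rw [e]
  constructor
  · exact ((gauss0_int n hrs).comp_sub_right _).const_mul _
  · rw [integral_const_mul, integral_sub_right_eq_self (fun η : EE n => exp (-((r+s)*‖η‖^2))), gauss0 n hrs]
    ring

noncomputable def TT (w : ℝ × ℝ) : ℝ := 1/w.1 + 1/w.2
noncomputable def GG (n : ℕ) (T : ℝ) (x : EE n) : ℝ := T^(-((n:ℝ)/2)) * exp (-(‖x‖^2/T))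
noncomputable def F0 (γ y : ℝ) (w : ℝ × ℝ) : ℝ :=
  (y^(2*γ) * (w.1^(γ-1) * exp (-(w.1*y^2)))) * (w.2^(-γ-1) * exp (-w.2))
noncomputable def F1 (γ y : ℝ) (w : ℝ × ℝ) : ℝ :=
  (y^(2*γ-1) * (2*γ - 2*(w.1*y^2)) * (w.1^(γ-1) * exp (-(w.1*y^2)))) * (w.2^(-γ-1) * exp (-w.2))
noncomputable def CC (n : ℕ) (γ : ℝ) : ℝ :=
  π^((n:ℝ)/2) / (Gamma (((n:ℝ)+2*γ)/2) * Gamma (((n:ℝ)-2*γ)/2))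

@[fun_prop] lemma TT_meas : Measurable TT := by unfold TT; fun_prop
lemma GG_meas (n : ℕ) : Measurable (fun z : EE n × (ℝ × ℝ) => GG n (TT z.2) z.1) := by
  unfold GG; fun_prop
lemma F0_meas (γ y : ℝ) : Measurable (F0 γ y) := by unfold F0; fun_prop
lemma F1_meas (γ y : ℝ) : Measurable (F1 γ y) := by unfold F1; fun_prop

lemma TT_pos {w : ℝ × ℝ} (hw : 0 < w.1 ∧ 0 < w.2) : 0 < TT w := by
  have := hw.1; have := hw.2
  unfold TT; positivity

lemma GG_nonneg {n : ℕ} {w : ℝ × ℝ} (hw : 0 < w.1 ∧ 0 < w.2) (x : EE n) : 0 ≤ GG n (TT w) x := by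
  have := TT_pos hw
  unfold GG; positivity

lemma GG_le {n : ℕ} {w : ℝ × ℝ} (hw : 0 < w.1 ∧ 0 < w.2) (x : EE n) :
    GG n (TT w) x ≤ w.2^((n:ℝ)/2) := by
  have h := TT_pos hw
  have h1 := hw.1
  have h2 := hw.2
  unfold GG
  have e1 : exp (-(‖x‖^2/TT w)) ≤ 1 := by
    rw [exp_le_one_iff]; have : 0 ≤ ‖x‖^2/TT w := by positivity
    linarith
  have e2 : TT w ^ (-((n:ℝ)/2)) ≤ w.2^((n:ℝ)/2) := by
    rw [Real.rpow_neg h.le, ← Real.inv_rpow h.le]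
    apply Real.rpow_le_rpow (by positivity) _ (by positivity)
    rw [inv_le_comm₀ h h2]
    unfold TT
    have : 0 < 1/w.1 := by positivity
    rw [inv_eq_one_div]; linarith
  calc _ ≤ w.2^((n:ℝ)/2) * 1 := by gcongr
    _ = _ := mul_one _

lemma gam_c_int {a c : ℝ} (ha : 0 < a) (hc : 0 < c) :
    Integrable (fun r : ℝ => r^(a-1) * exp (-(c*r))) nuP := by
  apply Integrable.of_integral_ne_zero
  rw [Real.integral_rpow_mul_exp_neg_mul_Ioi ha hc]
  have := Gamma_pos_of_pos ha
  positivity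

lemma bnd_int {γ c : ℝ} {n : ℕ} (h0 : 0 < γ) (hn : γ < (n:ℝ)/2) (hc : 0 < c) (D : ℝ) :
    Integrable (fun w : ℝ × ℝ => (D * ((1 + w.1) * (w.1^(γ-1) * exp (-(c*w.1))))) * (w.2^((n:ℝ)/2-γ-1) * exp (-w.2)))
      (nuP.prod nuP) := by
  have h1 := gam_c_int h0 hc
  have h2 := gam_c_int (by linarith : 0 < γ+1) hc
  have h3 := gam_c_int (by linarith : 0 < (n:ℝ)/2-γ) one_pos
  simp only [one_mul] at h3
  refine Integrable.mul_prod (f := fun r => D * ((1 + r) * (r^(γ-1) * exp (-(c*r))))) (Integrable.const_mul ?_ D) h3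
  refine (h1.add h2).congr ?_
  filter_upwards [ae_nuP] with r hr
  simp only [Pi.add_apply]
  rw [show γ + 1 - 1 = (γ - 1) + 1 by ring, Real.rpow_add_one hr.ne']
  ring

lemma F0_int {γ y : ℝ} {n : ℕ} (h0 : 0 < γ) (hn : γ < (n:ℝ)/2) (hy : 0 < y) (x : EE n) :
    Integrable (fun w => F0 γ y w * GG n (TT w) x) (nuP.prod nuP) := by
  refine (bnd_int h0 hn (by positivity : 0 < y^2) (y^(2*γ))).mono' ?_ ?_
  · exact ((F0_meas γ y).mul ((GG_meas n).comp measurable_prodMk_left)).aestronglyMeasurable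
  · filter_upwards [ae_nuP2] with w hw
    have h1 := hw.1
    have h2 := hw.2
    have h3 := GG_nonneg hw x
    have h4 := GG_le hw x
    rw [Real.norm_of_nonneg (by unfold F0; positivity)]
    calc F0 γ y w * GG n (TT w) x ≤ F0 γ y w * w.2^((n:ℝ)/2) := by
          apply mul_le_mul_of_nonneg_left h4; unfold F0; positivity
      _ = (y^(2*γ) * (1 * (w.1^(γ-1) * exp (-(y^2*w.1))))) * (w.2^((n:ℝ)/2-γ-1) * exp (-w.2)) := by
          unfold F0
          rw [show (n:ℝ)/2-γ-1 = (-γ-1) + (n:ℝ)/2 by ring, Real.rpow_add h2, mul_comm w.1]; ring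
      _ ≤ _ := by gcongr; linarith

lemma U_repr {γ y : ℝ} {n : ℕ} (h0 : 0 < γ) (hn : γ < (n:ℝ)/2) (hy : 0 < y) (x : EE n) :
    ∫ ξ : EE n, y^(2*γ) * (‖x-ξ‖^2+y^2)^(-(((n:ℝ)+2*γ)/2)) * (1+‖ξ‖^2)^(-(((n:ℝ)-2*γ)/2))
      = CC n γ * ∫ w, F0 γ y w * GG n (TT w) x ∂(nuP.prod nuP) := by
  set m1 := ((n:ℝ)+2*γ)/2 with hm1
  set m2 := ((n:ℝ)-2*γ)/2 with hm2
  have p1 : 0 < m1 := by rw [hm1]; linarith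
  have p2 : 0 < m2 := by rw [hm2]; linarith
  have G1 := Gamma_pos_of_pos p1
  have G2 := Gamma_pos_of_pos p2
  let H : EE n → ℝ × ℝ → ℝ := fun ξ w =>
    (w.1^(m1-1) * exp (-((‖x-ξ‖^2+y^2)*w.1))) * (w.2^(m2-1) * exp (-((1+‖ξ‖^2)*w.2)))
  have mH : Measurable (Function.uncurry H) := by
    unfold H; simp only [Function.uncurry_def]; fun_prop
  have a1 : ∀ ξ, ∫ w, H ξ w ∂(nuP.prod nuP) =
      (Gamma m1 * Gamma m2) * ((‖x-ξ‖^2+y^2)^(-m1) * (1+‖ξ‖^2)^(-m2)) := by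
    intro ξ
    have q1 : 0 < ‖x-ξ‖^2+y^2 := by positivity
    have q2 : 0 < 1+‖ξ‖^2 := by positivity
    simp only [H]
    rw [integral_prod_mul (fun r => r^(m1-1) * exp (-((‖x-ξ‖^2+y^2)*r))) (fun s => s^(m2-1) * exp (-((1+‖ξ‖^2)*s))),
      Real.integral_rpow_mul_exp_neg_mul_Ioi p1 q1, Real.integral_rpow_mul_exp_neg_mul_Ioi p2 q2,
      Real.rpow_neg q1.le, Real.rpow_neg q2.le, one_div, one_div, Real.inv_rpow q1.le, Real.inv_rpow q2.le]
    ring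
  have a2 : ∀ w : ℝ × ℝ, 0 < w.1 ∧ 0 < w.2 → Integrable (fun ξ => H ξ w) ∧
      y^(2*γ) * ∫ ξ, H ξ w = π^((n:ℝ)/2) * (F0 γ y w * GG n (TT w) x) := by
    rintro ⟨r, s⟩ ⟨hr, hs⟩
    simp only at hr hs
    obtain ⟨c1, c2⟩ := gauss_conv n hr hs x
    have e : (fun ξ => H ξ (r,s)) = fun ξ => (r^(m1-1) * s^(m2-1) * exp (-(r*y^2)) * exp (-s)) *
        (exp (-(r*‖x-ξ‖^2)) * exp (-(s*‖ξ‖^2))) := by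
      funext ξ
      simp only [H]
      rw [show -((‖x-ξ‖^2+y^2)*r) = -(r*y^2) + -(r*‖x-ξ‖^2) by ring,
        show -((1+‖ξ‖^2)*s) = -s + -(s*‖ξ‖^2) by ring, exp_add, exp_add]
      ring
    rw [e]
    refine ⟨c1.const_mul _, ?_⟩
    rw [integral_const_mul, c2]
    have hrs : 0 < r + s := by positivity
    simp only [F0, GG, TT]
    have t1 : (1/r+1/s) = (r+s)*(r⁻¹*s⁻¹) := by field_simp; ring
    rw [show ‖x‖^2/(1/r+1/s) = r*s/(r+s)*‖x‖^2 by field_simp; ring]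
    rw [t1, Real.mul_rpow hrs.le (by positivity), Real.mul_rpow (by positivity) (by positivity),
      Real.inv_rpow hr.le, Real.inv_rpow hs.le, ← Real.rpow_neg hr.le, ← Real.rpow_neg hs.le, neg_neg,
      Real.div_rpow pi_pos.le hrs.le, Real.rpow_neg hrs.le,
      show m1 - 1 = (n:ℝ)/2 + (γ-1) by rw [hm1]; ring, show m2 - 1 = (n:ℝ)/2 + (-γ-1) by rw [hm2]; ring,
      Real.rpow_add hr, Real.rpow_add hs]
    ring
  have hy2 : 0 < y^(2*γ) := by positivity
  have a3 : ∀ w : ℝ × ℝ, 0 < w.1 ∧ 0 < w.2 →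
      ∫ ξ, H ξ w = (y^(2*γ))⁻¹ * π^((n:ℝ)/2) * (F0 γ y w * GG n (TT w) x) := by
    intro w hw
    rw [mul_assoc, ← (a2 w hw).2, ← mul_assoc, inv_mul_cancel₀ hy2.ne', one_mul]
  have hI : Integrable (Function.uncurry H) ((volume : Measure (EE n)).prod (nuP.prod nuP)) := by
    apply pos_swap _ _ _ mH
    · filter_upwards [ae_nuP2] with w hw
      refine ae_of_all _ fun ξ => ?_
      have := hw.1; have := hw.2
      simp only [H]; positivity
    · filter_upwards [ae_nuP2] with w hw using (a2 w hw).1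
    · refine ((F0_int h0 hn hy x).const_mul ((y^(2*γ))⁻¹ * π^((n:ℝ)/2))).congr ?_
      filter_upwards [ae_nuP2] with w hw using (a3 w hw).symm
  have s1 := integral_integral_swap hI
  simp_rw [a1] at s1
  rw [integral_const_mul] at s1
  have s2 : ∫ w, (∫ ξ, H ξ w) ∂(nuP.prod nuP) = (y^(2*γ))⁻¹ * π^((n:ℝ)/2) * ∫ w, (F0 γ y w * GG n (TT w) x) ∂(nuP.prod nuP) := by
    rw [← integral_const_mul]
    apply integral_congr_ae
    filter_upwards [ae_nuP2] with w hw using a3 w hw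
  rw [s2] at s1
  simp_rw [mul_assoc]
  rw [integral_const_mul, CC, ← hm1, ← hm2]
  have : ∫ ξ : EE n, (‖x-ξ‖^2+y^2)^(-m1) * (1+‖ξ‖^2)^(-m2) = (Gamma m1 * Gamma m2)⁻¹ * ((y^(2*γ))⁻¹ * π^((n:ℝ)/2) * ∫ w, (F0 γ y w * GG n (TT w) x) ∂(nuP.prod nuP)) := by
    rw [← s1, ← mul_assoc, inv_mul_cancel₀ (by positivity), one_mul]
  rw [this]
  field_simp

lemma F0_deriv {γ y : ℝ} {n : ℕ} (h0 : 0 < γ) (hn : γ < (n:ℝ)/2) (hy : 0 < y) (x : EE n) :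
    HasDerivAt (fun y => ∫ w, F0 γ y w * GG n (TT w) x ∂(nuP.prod nuP))
      (∫ w, F1 γ y w * GG n (TT w) x ∂(nuP.prod nuP)) y := by
  have hc : 0 < (y/2)^2 := by positivity
  have mG : Measurable (fun w => GG n (TT w) x) := (GG_meas n).comp measurable_prodMk_left
  have hmem : Ioo (y/2) (2*y) ∈ 𝓝 y := Ioo_mem_nhds (by linarith) (by linarith)
  refine (hasDerivAt_integral_of_dominated_loc_of_deriv_le (F := fun y w => F0 γ y w * GG n (TT w) x)
    (F' := fun y w => F1 γ y w * GG n (TT w) x) hmem ?_ (F0_int h0 hn hy x) ?_ ?_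
    (bnd_int h0 hn hc ((2*y)^(2*γ) * (2/y) * (2*γ + 8*y^2))) ?_).2
  · exact Eventually.of_forall fun y => ((F0_meas γ y).mul mG).aestronglyMeasurable
  · exact ((F1_meas γ y).mul mG).aestronglyMeasurable
  · filter_upwards [ae_nuP2] with w hw z hz
    have h1 := hw.1
    have h2 := hw.2
    have h3 := GG_nonneg hw x
    have h4 := GG_le hw x
    have hz0 : 0 < z := by linarith [hz.1]
    rw [norm_mul, Real.norm_of_nonneg h3]
    have b1 : z^(2*γ-1) ≤ (2*y)^(2*γ) * (2/y) := by
      rw [Real.rpow_sub_one hz0.ne', div_eq_mul_inv]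
      gcongr
      · exact hz.2.le
      · rw [inv_le_comm₀ hz0 (by positivity), inv_div]; exact hz.1.le
    have b2 : |2*γ - 2*(w.1*z^2)| ≤ (2*γ + 8*y^2) * (1 + w.1) := by
      have hz2 : z^2 ≤ (2*y)^2 := by gcongr; exact hz.2.le
      have : w.1 * z^2 ≤ w.1 * (2*y)^2 := by gcongr
      have p0 : 0 ≤ w.1 * z^2 := by positivity
      have p3 : 0 ≤ γ * w.1 := by positivity
      have p4 : 0 ≤ y^2 := by positivity
      rw [abs_le]; constructor <;> nlinarith
    have b3 : exp (-(w.1*z^2)) ≤ exp (-((y/2)^2*w.1)) := by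
      rw [exp_le_exp, neg_le_neg_iff, mul_comm]; gcongr; exact hz.1.le
    have e1 : ‖F1 γ z w‖ = (z^(2*γ-1) * |2*γ - 2*(w.1*z^2)| * (w.1^(γ-1) * exp (-(w.1*z^2)))) * (w.2^(-γ-1) * exp (-w.2)) := by
      unfold F1
      rw [Real.norm_eq_abs, abs_mul, abs_mul, abs_mul, abs_of_pos (by positivity : 0 < z^(2*γ-1)),
        abs_of_pos (by positivity : 0 < w.1^(γ-1) * exp (-(w.1*z^2))), abs_of_pos (by positivity : 0 < w.2^(-γ-1) * exp (-w.2))]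
    rw [e1]
    calc _ ≤ (((2*y)^(2*γ) * (2/y)) * ((2*γ + 8*y^2) * (1 + w.1)) * (w.1^(γ-1) * exp (-((y/2)^2*w.1)))) * (w.2^(-γ-1) * exp (-w.2)) * w.2^((n:ℝ)/2) := by
          gcongr
      _ = _ := by
          rw [show (n:ℝ)/2-γ-1 = (-γ-1) + (n:ℝ)/2 by ring, Real.rpow_add h2]; ring
  · filter_upwards [ae_nuP2] with w hw z hz
    have hz0 : 0 < z := by linarith [hz.1]
    unfold F0 F1
    apply HasDerivAt.mul_const
    apply HasDerivAt.mul_const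
    have d1 := Real.hasDerivAt_rpow_const (x := z) (p := 2*γ) (Or.inl hz0.ne')
    have d2 : HasDerivAt (fun z => exp (-(w.1*z^2))) (exp (-(w.1*z^2)) * (-(w.1*(2*z)))) z := by
      have := ((hasDerivAt_pow 2 z).const_mul w.1).neg.exp
      simpa using this
    have d3 := d1.mul (d2.const_mul (w.1^(γ-1)))
    refine d3.congr_deriv ?_
    have : z^(2*γ) = z^(2*γ-1) * z := by rw [Real.rpow_sub_one hz0.ne']; field_simp
    rw [this]; ring

noncomputable def hk (k c b r : ℝ) : ℝ := r^(b-1) * (exp (-(r*c)) * exp (-(k/r)))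

lemma hk_spec {k y : ℝ} (hk0 : 0 < k) (hy : 0 < y) (b : ℝ) :
    Integrable (hk k (y^2) b) nuP ∧ ∫ r, hk k (y^2) b r ∂nuP = (y^2)^(-b) * phi b (k*y^2) := by
  have hc : 0 < y^2 := by positivity
  generalize y^2 = c at *
  let g : ℝ → ℝ := fun p => p^(b-1) * (exp (-p) * exp (-(k*c/p)))
  have hg : Integrable g nuP := phi_integrable b (by positivity)
  have e : ∀ r ∈ Ioi (0:ℝ), c^(1-b) * g (c*r) = hk k c b r := by
    intro r hr
    have hr : 0 < r := hr
    simp only [g, hk]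
    rw [Real.mul_rpow hc.le hr.le, show k*c/(c*r) = k/r by field_simp, mul_comm c r]
    have : c^(1-b) * c^(b-1) = 1 := by rw [← Real.rpow_add hc, show 1-b+(b-1) = 0 by ring, Real.rpow_zero]
    linear_combination (r^(b-1) * (exp (-(r*c)) * exp (-(k/r)))) * this
  have g1 : IntegrableOn (fun z => g (c*z)) (Ioi 0) := by
    have := (integrableOn_Ioi_comp_mul_left_iff g 0 hc)
    rw [mul_zero] at this
    exact this.2 hg
  have g2 := integral_comp_mul_left_Ioi g 0 hc
  rw [mul_zero] at g2
  constructor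
  · exact IntegrableOn.congr_fun (g1.const_mul (c^(1-b))) e measurableSet_Ioi
  · rw [← setIntegral_congr_fun measurableSet_Ioi e, integral_const_mul, g2, smul_eq_mul, ← mul_assoc]
    congr 1
    rw [← Real.rpow_neg_one, ← Real.rpow_add hc]; ring_nf

noncomputable def F1e (γ ε y : ℝ) (w : ℝ × ℝ) : ℝ :=
  (y^(2*γ-1) * (2*γ + ε * (2*(w.1*y^2))) * (w.1^(γ-1) * exp (-(w.1*y^2)))) * (w.2^(-γ-1) * exp (-w.2))

noncomputable def phA (γ ε z : ℝ) : ℝ := 2*γ*phi (γ-1) z + ε*2*phi γ z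
noncomputable def phB (γ ε z : ℝ) : ℝ := 2*γ*phi γ z + ε*2*phi (γ+1) z
noncomputable def S1 (γ ε y k : ℝ) : ℝ :=
  y * (phi (-γ) k * phA γ ε (k*y^2)) + y⁻¹ * (phi (-γ-1) k * phB γ ε (k*y^2))

lemma S0_spec {γ k y : ℝ} (hk0 : 0 < k) (hy : 0 < y) :
    Integrable (fun w => F0 γ y w * exp (-(k*TT w))) (nuP.prod nuP) ∧
    ∫ w, F0 γ y w * exp (-(k*TT w)) ∂(nuP.prod nuP) = phi (-γ) k * phi γ (k*y^2) := by
  have e : (fun w => F0 γ y w * exp (-(k*TT w))) =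
      fun w => y^(2*γ) * (hk k (y^2) γ w.1 * hk k (1^2) (-γ) w.2) := by
    funext w
    simp only [F0, TT, hk]
    rw [show -(k*(1/w.1+1/w.2)) = -(k/w.1) + -(k/w.2) by ring, exp_add, one_pow, mul_one]
    ring
  obtain ⟨i1, v1⟩ := hk_spec hk0 hy γ
  obtain ⟨i2, v2⟩ := hk_spec hk0 one_pos (-γ)
  rw [e]
  refine ⟨(i1.mul_prod i2).const_mul _, ?_⟩
  rw [integral_const_mul, integral_prod_mul, v1, v2]
  have q : y^(2*γ) * (y^2)^(-γ) = 1 := by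
    rw [← Real.rpow_natCast y 2, ← Real.rpow_mul hy.le, ← Real.rpow_add hy]; simp
  simp only [one_pow, Real.one_rpow, one_mul, mul_one]
  linear_combination (phi γ (k*y^2) * phi (-γ) k) * q

lemma S1_spec {γ k y : ℝ} (ε : ℝ) (hk0 : 0 < k) (hy : 0 < y) :
    Integrable (fun w => F1e γ ε y w * (TT w * exp (-(k*TT w)))) (nuP.prod nuP) ∧
    ∫ w, F1e γ ε y w * (TT w * exp (-(k*TT w))) ∂(nuP.prod nuP) = S1 γ ε y k := by
  let R1 : ℝ → ℝ := fun r => 2*γ*hk k (y^2) (γ-1) r + ε*2*y^2*hk k (y^2) γ r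
  let R2 : ℝ → ℝ := fun r => 2*γ*hk k (y^2) γ r + ε*2*y^2*hk k (y^2) (γ+1) r
  let s1 := hk k (1^2) (-γ)
  let s2 := hk k (1^2) (-γ-1)
  have e : (fun w => y^(2*γ-1) * (R1 w.1 * s1 w.2) + y^(2*γ-1) * (R2 w.1 * s2 w.2)) =ᵐ[nuP.prod nuP] (fun w => F1e γ ε y w * (TT w * exp (-(k*TT w)))) := by
    filter_upwards [ae_nuP2] with w hw
    have h1 := hw.1
    have h2 := hw.2
    simp only [F1e, TT, hk, R1, R2, s1, s2]
    rw [show -(k*(1/w.1+1/w.2)) = -(k/w.1) + -(k/w.2) by ring, exp_add, one_pow, mul_one,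
      show γ+1-1 = (γ-1)+1 by ring, Real.rpow_add_one h1.ne', Real.rpow_sub_one h1.ne' (γ-1),
      Real.rpow_sub_one h2.ne' (-γ-1)]
    field_simp
  obtain ⟨i0, v0⟩ := hk_spec hk0 hy (γ-1)
  obtain ⟨i1, v1⟩ := hk_spec hk0 hy γ
  obtain ⟨i2, v2⟩ := hk_spec hk0 hy (γ+1)
  obtain ⟨j1, u1⟩ := hk_spec hk0 one_pos (-γ)
  obtain ⟨j2, u2⟩ := hk_spec hk0 one_pos (-γ-1)
  have I1 : Integrable R1 nuP := (i0.const_mul _).add (i1.const_mul _)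
  have I2 : Integrable R2 nuP := (i1.const_mul _).add (i2.const_mul _)
  have K1 : Integrable (fun w : ℝ × ℝ => y^(2*γ-1) * (R1 w.1 * s1 w.2)) (nuP.prod nuP) := (I1.mul_prod j1).const_mul _
  have K2 : Integrable (fun w : ℝ × ℝ => y^(2*γ-1) * (R2 w.1 * s2 w.2)) (nuP.prod nuP) := (I2.mul_prod j2).const_mul _
  refine ⟨(K1.add K2).congr e, ?_⟩
  rw [← integral_congr_ae e, integral_add K1 K2, integral_const_mul, integral_const_mul,
    integral_prod_mul, integral_prod_mul]
  have V1 : ∫ r, R1 r ∂nuP = 2*γ*((y^2)^(-(γ-1)) * phi (γ-1) (k*y^2)) + ε*2*y^2*((y^2)^(-γ) * phi γ (k*y^2)) := by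
    rw [← v0, ← v1, ← integral_const_mul, ← integral_const_mul, ← integral_add (i0.const_mul _) (i1.const_mul _)]
  have V2 : ∫ r, R2 r ∂nuP = 2*γ*((y^2)^(-γ) * phi γ (k*y^2)) + ε*2*y^2*((y^2)^(-(γ+1)) * phi (γ+1) (k*y^2)) := by
    rw [← v1, ← v2, ← integral_const_mul, ← integral_const_mul, ← integral_add (i1.const_mul _) (i2.const_mul _)]
  have hy2 : 0 < y^2 := by positivity
  have q1 : (y^2)^(-(γ-1)) = (y^2)^(-γ) * y^2 := by
    rw [show -(γ-1) = -γ + 1 by ring, Real.rpow_add_one hy2.ne']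
  have q2 : (y^2)^(-(γ+1)) = (y^2)^(-γ) / y^2 := by
    rw [show -(γ+1) = -γ - 1 by ring, Real.rpow_sub_one hy2.ne']
  have q3 : y^(2*γ-1) * (y^2)^(-γ) = y⁻¹ := by
    rw [← Real.rpow_natCast y 2, ← Real.rpow_mul hy.le, ← Real.rpow_add hy, ← Real.rpow_neg_one]
    congr 1; push_cast; ring
  simp only [s1, s2]
  rw [V1, V2, u1, u2, q1, q2, S1, phA, phB, ← q3]
  have q4 : y = y^(2*γ-1) * (y^2)^(-γ) * y^2 := by rw [q3]; field_simp
  have q5 : (y^2) * ((y^2)^(-γ)/y^2) = (y^2)^(-γ) := by field_simp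
  simp only [one_pow, Real.one_rpow, one_mul, mul_one]
  generalize phi (-γ) k = f1
  generalize phi (-γ-1) k = f2
  generalize phi (γ-1) (k*y^2) = f3
  generalize phi (γ) (k*y^2) = f4
  generalize phi (γ+1) (k*y^2) = f5
  generalize (y^2)^(-γ) = Y at *
  generalize y^(2*γ-1) = Z at *
  have : y * (f1 * (2*γ*f3 + ε*2*f4)) = Z*Y*y^2 * (f1 * (2*γ*f3 + ε*2*f4)) := by rw [← q4]
  rw [this]
  field_simp

lemma rpow_half_sq {k e : ℝ} (hk : 0 < k) : k^(e/2) * k^(e/2) = k^e := by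
  rw [← Real.rpow_add hk]; ring_nf

lemma GGmul (n : ℕ) {T T' : ℝ} (x : EE n) :
    GG n T x * GG n T' x = (T^(-((n:ℝ)/2)) * T'^(-((n:ℝ)/2))) * exp (-((1/T+1/T')*‖x‖^2)) := by
  unfold GG
  rw [show -((1/T+1/T')*‖x‖^2) = -(‖x‖^2/T) + -(‖x‖^2/T') by ring, exp_add]
  ring

lemma Tpow {n : ℕ} {T T' : ℝ} (h : 0 < T) (h' : 0 < T') :
    (T^(-((n:ℝ)/2)) * T'^(-((n:ℝ)/2))) * (π/(1/T+1/T'))^((n:ℝ)/2) = π^((n:ℝ)/2) * (1/(T+T'))^((n:ℝ)/2) := by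
  rw [show π/(1/T+1/T') = π * (1/(T+T')) * (T*T') by field_simp; ring, Real.mul_rpow (by positivity) (by positivity),
    Real.mul_rpow (by positivity) (by positivity), Real.mul_rpow h.le h'.le, Real.rpow_neg h.le, Real.rpow_neg h'.le]
  have : T^((n:ℝ)/2) ≠ 0 := by positivity
  have : T'^((n:ℝ)/2) ≠ 0 := by positivity
  field_simp

lemma inner0 {γ y : ℝ} {n : ℕ} (hn : 0 < n) (hy : 0 < y)
    (hi : Integrable (fun k => k^((n:ℝ)/2-1) * (phi (-γ) k * phi γ (k*y^2))^2) nuP) :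
    ∫ x : EE n, (∫ w, F0 γ y w * GG n (TT w) x ∂(nuP.prod nuP))^2 =
      π^((n:ℝ)/2) / Gamma ((n:ℝ)/2) * ∫ k, k^((n:ℝ)/2-1) * (phi (-γ) k * phi γ (k*y^2))^2 ∂nuP := by
  have hn' : (0:ℝ) < (n:ℝ)/2 := by positivity
  have hG := Gamma_pos_of_pos hn'
  have ev : ∀ k, 0 < k → (∫ w, F0 γ y w * (k^(((n:ℝ)/2-1)/2) * exp (-(k*TT w))) ∂(nuP.prod nuP))^2
      = k^((n:ℝ)/2-1) * (phi (-γ) k * phi γ (k*y^2))^2 := by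
    intro k hk0
    simp_rw [mul_left_comm (F0 γ y _)]
    rw [integral_const_mul, (S0_spec hk0 hy).2, mul_pow, sq (k^(((n:ℝ)/2-1)/2)), rpow_half_sq hk0]
  rw [planch volume nuP (nuP.prod nuP) (fun x w => GG n (TT w) x)
    (fun k w => k^(((n:ℝ)/2-1)/2) * exp (-(k*TT w))) (F0 γ y) (F0 γ y) (GG_meas n)
    (by simp only [Function.uncurry_def]; fun_prop) (F0_meas γ y) (fun w => 0 < w.1 ∧ 0 < w.2) ae_nuP2
    (fun x w hw => GG_nonneg hw x) ?_ ?_ (π^((n:ℝ)/2) / Gamma ((n:ℝ)/2)) ?_ ?_ ?_ ?_]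
  · congr 1
    apply integral_congr_ae
    filter_upwards [ae_nuP] with k hk0 using ev k hk0
  · filter_upwards [ae_nuP] with k hk0 w hw
    positivity
  · intro w w' hw hw'
    have := TT_pos hw
    have := TT_pos hw'
    simp_rw [GGmul]
    exact (gauss0_int n (by positivity)).const_mul _
  · intro w w' hw hw'
    have t1 := TT_pos hw
    have t2 := TT_pos hw'
    simp_rw [GGmul]
    rw [integral_const_mul, gauss0 n (by positivity), Tpow t1 t2]
    have : ∫ k, k^(((n:ℝ)/2-1)/2) * exp (-(k*TT w)) * (k^(((n:ℝ)/2-1)/2) * exp (-(k*TT w'))) ∂nuP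
        = ∫ k in Ioi (0:ℝ), k^((n:ℝ)/2-1) * exp (-((TT w + TT w')*k)) := by
      apply integral_congr_ae
      filter_upwards [ae_nuP] with k hk0
      rw [← rpow_half_sq (e := (n:ℝ)/2-1) hk0, show -((TT w + TT w')*k) = -(k*TT w) + -(k*TT w') by ring, exp_add]; ring
    rw [this, Real.integral_rpow_mul_exp_neg_mul_Ioi hn' (by positivity)]
    field_simp
  · intro w hw
    have := hw.1; have := hw.2
    rw [abs_of_nonneg]; unfold F0; positivity
  · filter_upwards [ae_nuP] with k hk0
    simp_rw [mul_left_comm (F0 γ y _)]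
    exact (S0_spec hk0 hy).1.const_mul _
  · refine hi.congr ?_
    filter_upwards [ae_nuP] with k hk0 using (ev k hk0).symm

lemma inner1 {γ y : ℝ} {n : ℕ} (h0 : 0 < γ) (i : Fin n) (hy : 0 < y)
    (hi : Integrable (fun k => k^((n:ℝ)/2) * (S1 γ 1 y k)^2) nuP) :
    ∫ x : EE n, (x i)^2 * (∫ w, F1 γ y w * GG n (TT w) x ∂(nuP.prod nuP))^2 =
      π^((n:ℝ)/2) / (2 * Gamma ((n:ℝ)/2+1)) * ∫ k, k^((n:ℝ)/2) * (S1 γ (-1) y k)^2 ∂nuP := by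
  have hn' : (0:ℝ) < (n:ℝ)/2 + 1 := by positivity
  have hG := Gamma_pos_of_pos hn'
  have ev : ∀ ε k, 0 < k → (∫ w, F1e γ ε y w * (k^(((n:ℝ)/2)/2) * (TT w * exp (-(k*TT w)))) ∂(nuP.prod nuP))^2
      = k^((n:ℝ)/2) * (S1 γ ε y k)^2 := by
    intro ε k hk0
    simp_rw [mul_left_comm (F1e γ ε y _) (k^(((n:ℝ)/2)/2))]
    rw [integral_const_mul, (S1_spec ε hk0 hy).2, mul_pow, sq (k^(((n:ℝ)/2)/2)), rpow_half_sq hk0]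
  have hF : F1 γ y = F1e γ (-1) y := by
    funext w; unfold F1 F1e; ring
  have e0 : ∀ x : EE n, (x i)^2 * (∫ w, F1 γ y w * GG n (TT w) x ∂(nuP.prod nuP))^2 =
      (∫ w, F1e γ (-1) y w * (|x i| * GG n (TT w) x) ∂(nuP.prod nuP))^2 := by
    intro x
    simp_rw [mul_left_comm (F1e γ _ y _)]
    rw [integral_const_mul, mul_pow, sq_abs, hF]
  simp_rw [e0]
  rw [planch volume nuP (nuP.prod nuP) (fun x w => |x i| * GG n (TT w) x)
    (fun k w => k^(((n:ℝ)/2)/2) * (TT w * exp (-(k*TT w)))) (F1e γ (-1) y) (F1e γ 1 y) ?_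
    (by simp only [Function.uncurry_def]; fun_prop) (hF ▸ F1_meas γ y) (fun w => 0 < w.1 ∧ 0 < w.2) ae_nuP2
    (fun x w hw => mul_nonneg (abs_nonneg _) (GG_nonneg hw x)) ?_ ?_ (π^((n:ℝ)/2) / (2*Gamma ((n:ℝ)/2+1))) ?_ ?_ ?_ ?_]
  · congr 1
    apply integral_congr_ae
    filter_upwards [ae_nuP] with k hk0 using ev (-1) k hk0
  · have := GG_meas n
    have m2 : Measurable (fun z : EE n × (ℝ × ℝ) => |z.1 i|) := by fun_prop
    exact m2.mul this
  · filter_upwards [ae_nuP] with k hk0 w hw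
    have := TT_pos hw
    positivity
  · intro w w' hw hw'
    have := TT_pos hw
    have := TT_pos hw'
    have e : (fun x : EE n => |x i| * GG n (TT w) x * (|x i| * GG n (TT w') x)) =
      fun x => ((TT w)^(-((n:ℝ)/2)) * (TT w')^(-((n:ℝ)/2))) * ((x i)^2 * exp (-((1/TT w+1/TT w')*‖x‖^2))) := by
      funext x
      rw [mul_mul_mul_comm, GGmul, abs_mul_abs_self]; ring
    rw [e]
    exact (gauss2_int n i (by positivity)).const_mul _
  · intro w w' hw hw'
    have t1 := TT_pos hw
    have t2 := TT_pos hw'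
    have e : (fun x : EE n => |x i| * GG n (TT w) x * (|x i| * GG n (TT w') x)) =
      fun x => ((TT w)^(-((n:ℝ)/2)) * (TT w')^(-((n:ℝ)/2))) * ((x i)^2 * exp (-((1/TT w+1/TT w')*‖x‖^2))) := by
      funext x
      rw [mul_mul_mul_comm, GGmul, abs_mul_abs_self]; ring
    rw [e]
    rw [integral_const_mul, gauss2 n i (by positivity), ← mul_div_assoc, Tpow t1 t2]
    have : ∫ k, k^(((n:ℝ)/2)/2) * (TT w * exp (-(k*TT w))) * (k^(((n:ℝ)/2)/2) * (TT w' * exp (-(k*TT w')))) ∂nuP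
        = ∫ k in Ioi (0:ℝ), (TT w * TT w') * (k^((n:ℝ)/2+1-1) * exp (-((TT w + TT w')*k))) := by
      apply integral_congr_ae
      filter_upwards [ae_nuP] with k hk0
      rw [show (n:ℝ)/2+1-1 = (n:ℝ)/2 by ring, ← rpow_half_sq (e := (n:ℝ)/2) hk0, show -((TT w + TT w')*k) = -(k*TT w) + -(k*TT w') by ring, exp_add]; ring
    rw [this, integral_const_mul, Real.integral_rpow_mul_exp_neg_mul_Ioi hn' (by positivity),
      Real.rpow_add_one (by positivity)]
    have : 0 < (1/(TT w + TT w'))^((n:ℝ)/2) := by positivity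
    generalize (1/(TT w + TT w'))^((n:ℝ)/2) = q at *
    field_simp
    ring
  · intro w hw
    have := hw.1; have := hw.2
    unfold F1e
    rw [abs_mul, abs_mul, abs_mul, abs_of_pos (by positivity : 0 < y^(2*γ-1)),
        abs_of_pos (by positivity : 0 < w.1^(γ-1) * exp (-(w.1*y^2))), abs_of_pos (by positivity : 0 < w.2^(-γ-1) * exp (-w.2))]
    gcongr
    have : 0 < w.1*y^2 := by positivity
    rw [abs_le]; constructor <;> linarith
  · filter_upwards [ae_nuP] with k hk0
    simp_rw [mul_left_comm (F1e γ 1 y _) (k^(((n:ℝ)/2)/2))]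
    exact (S1_spec 1 hk0 hy).1.const_mul _
  · refine hi.congr ?_
    filter_upwards [ae_nuP] with k hk0 using (ev 1 k hk0).symm

lemma quad {s b1 b2 c1 c2 α β α' β' : ℝ} (hs : 0 < s) (hb1 : 0 < s + b1) (hb2 : 0 < s + b2)
    (hc1 : 0 < s + c1) (hc2 : 0 < s + c2) (h11 : 0 < s + b1 + c1) (h12 : 0 < s + b1 + c2)
    (h21 : 0 < s + b2 + c1) (h22 : 0 < s + b2 + c2) :
    Integrable (fun z => z^(s-1) * ((α*phi b1 z + β*phi b2 z)*(α'*phi c1 z + β'*phi c2 z))) nuP ∧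
    ∫ z, z^(s-1) * ((α*phi b1 z + β*phi b2 z)*(α'*phi c1 z + β'*phi c2 z)) ∂nuP =
      α*α' * MM s b1 c1 + α*β' * MM s b1 c2 + β*α' * MM s b2 c1 + β*β' * MM s b2 c2 := by
  obtain ⟨i11, e11⟩ := phi_moment hs hb1 hc1 h11
  obtain ⟨i12, e12⟩ := phi_moment hs hb1 hc2 h12
  obtain ⟨i21, e21⟩ := phi_moment hs hb2 hc1 h21
  obtain ⟨i22, e22⟩ := phi_moment hs hb2 hc2 h22
  have e : (fun z => z^(s-1) * ((α*phi b1 z + β*phi b2 z)*(α'*phi c1 z + β'*phi c2 z))) =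
      fun z => (α*α') * (z^(s-1) * (phi b1 z * phi c1 z)) + (α*β') * (z^(s-1) * (phi b1 z * phi c2 z))
        + (β*α') * (z^(s-1) * (phi b2 z * phi c1 z)) + (β*β') * (z^(s-1) * (phi b2 z * phi c2 z)) := by
    funext z; ring
  have j11 := i11.const_mul (α*α')
  have j12 := i12.const_mul (α*β')
  have j21 := i21.const_mul (β*α')
  have j22 := i22.const_mul (β*β')
  rw [e]
  refine ⟨((j11.add j12).add j21).add j22, ?_⟩
  erw [integral_add ((j11.add j12).add j21) j22, integral_add (j11.add j12) j21, integral_add j11 j12]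
  simp only [integral_const_mul, e11, e12, e21, e22]

/-- value of the zeroth-order moment -/
lemma val0 {γ : ℝ} {n : ℕ} (h0 : 0 < γ) (h1 : γ < 1) (hn : 4 + 2*γ < (n:ℝ)) :
    Integrable (fun w : ℝ × ℝ => w.1^(3-2*γ) * (w.2^((n:ℝ)/2-1) * (phi (-γ) w.2 * phi γ (w.2*w.1^2))^2))
      (nuP.prod nuP) ∧
    ∫ y, ∫ k, y^(3-2*γ) * (k^((n:ℝ)/2-1) * (phi (-γ) k * phi γ (k*y^2))^2) ∂nuP ∂nuP =
      (1/2) * MM ((n:ℝ)/2-2+γ) (-γ) (-γ) * MM (2-γ) γ γ := by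
  obtain ⟨i1, e1⟩ := phi_moment (s := (n:ℝ)/2-2+γ) (b := -γ) (c := -γ) (by linarith) (by linarith)
    (by linarith) (by linarith)
  obtain ⟨i2, e2⟩ := phi_moment (s := 2-γ) (b := γ) (c := γ) (by linarith) (by linarith)
    (by linarith) (by linarith)
  have x1 : (n:ℝ)/2-1-((3-2*γ)+1)/2 = (n:ℝ)/2-2+γ-1 := by ring
  have x2 : ((3-2*γ)+1)/2-1 = 2-γ-1 := by ring
  have := sep (p := 3-2*γ) (m := (n:ℝ)/2-1) (P := fun k => phi (-γ) k * phi (-γ) k)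
    (Q := fun k => phi γ k * phi γ k)
    ((phi_measurable _).mul (phi_measurable _)) ((phi_measurable _).mul (phi_measurable _))
    (by rw [x1]; exact i1) (by rw [x2]; exact i2)
  rw [x1, x2, e1, e2] at this
  have sq : ∀ u v : ℝ, (u*v)^2 = u*u*(v*v) := fun u v => by ring
  simp only [sq]
  exact this

noncomputable def A2 (γ ε : ℝ) : ℝ := (2*γ)*(2*γ)*MM (3-γ) (γ-1) (γ-1) + (2*γ)*(ε*2) * MM (3-γ) (γ-1) γ
  + (ε*2)*(2*γ) * MM (3-γ) γ (γ-1) + (ε*2)*(ε*2)*MM (3-γ) γ γ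
noncomputable def AB (γ ε : ℝ) : ℝ := (2*γ)*(2*γ)*MM (2-γ) (γ-1) γ + (2*γ)*(ε*2) * MM (2-γ) (γ-1) (γ+1)
  + (ε*2)*(2*γ) * MM (2-γ) γ γ + (ε*2)*(ε*2)*MM (2-γ) γ (γ+1)
noncomputable def B2 (γ ε : ℝ) : ℝ := (2*γ)*(2*γ)*MM (1-γ) γ γ + (2*γ)*(ε*2) * MM (1-γ) γ (γ+1)
  + (ε*2)*(2*γ) * MM (1-γ) (γ+1) γ + (ε*2)*(ε*2)*MM (1-γ) (γ+1) (γ+1)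

lemma phA_meas (γ ε : ℝ) : Measurable (phA γ ε) := by
  unfold phA
  exact ((phi_measurable _).const_mul _).add ((phi_measurable _).const_mul _)
lemma phB_meas (γ ε : ℝ) : Measurable (phB γ ε) := by
  unfold phB
  exact ((phi_measurable _).const_mul _).add ((phi_measurable _).const_mul _)

lemma val1 {γ : ℝ} {n : ℕ} (h0 : 0 < γ) (h1 : γ < 1) (hn : 4 + 2*γ < (n:ℝ)) (ε : ℝ) :
    Integrable (fun w : ℝ × ℝ => w.1^(3-2*γ) * (w.2^((n:ℝ)/2) * (S1 γ ε w.1 w.2)^2)) (nuP.prod nuP) ∧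
    ∫ y, ∫ k, y^(3-2*γ) * (k^((n:ℝ)/2) * (S1 γ ε y k)^2) ∂nuP ∂nuP =
      (1/2) * (MM ((n:ℝ)/2-2+γ) (-γ) (-γ) * A2 γ ε + 2 * (MM ((n:ℝ)/2-1+γ) (-γ) (-γ-1) * AB γ ε)
        + MM ((n:ℝ)/2+γ) (-γ-1) (-γ-1) * B2 γ ε) := by
  have T1 := by
    obtain ⟨i1, e1⟩ := phi_moment (s := (n:ℝ)/2-2+γ) (b := -γ) (c := -γ) (by linarith) (by linarith)
      (by linarith) (by linarith)
    obtain ⟨i2, e2⟩ := quad (s := 3-γ) (b1 := γ-1) (b2 := γ) (c1 := γ-1) (c2 := γ) (α := 2*γ) (β := ε*2)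
      (α' := 2*γ) (β' := ε*2) (by linarith) (by linarith) (by linarith)
      (by linarith) (by linarith) (by linarith) (by linarith) (by linarith) (by linarith)
    have x1 : (n:ℝ)/2-((5-2*γ)+1)/2 = (n:ℝ)/2-2+γ-1 := by ring
    have x2 : ((5-2*γ)+1)/2-1 = 3-γ-1 := by ring
    have := sep (p := 5-2*γ) (m := (n:ℝ)/2) (P := fun k => phi (-γ) k * phi (-γ) k)
      (Q := fun k => phA γ ε k * phA γ ε k)
      ((phi_measurable _).mul (phi_measurable _)) ((phA_meas _ _).mul (phA_meas _ _))
      (by rw [x1]; exact i1) (by rw [x2]; exact i2)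
    rw [x1, x2, e1] at this
    erw [e2] at this
    change _ ∧ _ = 1/2 * MM ((n:ℝ)/2-2+γ) (-γ) (-γ) * A2 γ ε at this
    exact this
  have T2 := by
    obtain ⟨i1, e1⟩ := phi_moment (s := (n:ℝ)/2-1+γ) (b := -γ) (c := -γ-1) (by linarith) (by linarith)
      (by linarith) (by linarith)
    obtain ⟨i2, e2⟩ := quad (s := 2-γ) (b1 := γ-1) (b2 := γ) (c1 := γ) (c2 := γ+1) (α := 2*γ) (β := ε*2)
      (α' := 2*γ) (β' := ε*2) (by linarith) (by linarith) (by linarith)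
      (by linarith) (by linarith) (by linarith) (by linarith) (by linarith) (by linarith)
    have x1 : (n:ℝ)/2-((3-2*γ)+1)/2 = (n:ℝ)/2-1+γ-1 := by ring
    have x2 : ((3-2*γ)+1)/2-1 = 2-γ-1 := by ring
    have := sep (p := 3-2*γ) (m := (n:ℝ)/2) (P := fun k => phi (-γ) k * phi (-γ-1) k)
      (Q := fun k => phA γ ε k * phB γ ε k)
      ((phi_measurable _).mul (phi_measurable _)) ((phA_meas _ _).mul (phB_meas _ _))
      (by rw [x1]; exact i1) (by rw [x2]; exact i2)
    rw [x1, x2, e1] at this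
    erw [e2] at this
    change _ ∧ _ = 1/2 * MM ((n:ℝ)/2-1+γ) (-γ) (-γ-1) * AB γ ε at this
    exact this
  have T3 := by
    obtain ⟨i1, e1⟩ := phi_moment (s := (n:ℝ)/2+γ) (b := -γ-1) (c := -γ-1) (by linarith) (by linarith)
      (by linarith) (by linarith)
    obtain ⟨i2, e2⟩ := quad (s := 1-γ) (b1 := γ) (b2 := γ+1) (c1 := γ) (c2 := γ+1) (α := 2*γ) (β := ε*2)
      (α' := 2*γ) (β' := ε*2) (by linarith) (by linarith) (by linarith)
      (by linarith) (by linarith) (by linarith) (by linarith) (by linarith) (by linarith)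
    have x1 : (n:ℝ)/2-((1-2*γ)+1)/2 = (n:ℝ)/2+γ-1 := by ring
    have x2 : ((1-2*γ)+1)/2-1 = 1-γ-1 := by ring
    have := sep (p := 1-2*γ) (m := (n:ℝ)/2) (P := fun k => phi (-γ-1) k * phi (-γ-1) k)
      (Q := fun k => phB γ ε k * phB γ ε k)
      ((phi_measurable _).mul (phi_measurable _)) ((phB_meas _ _).mul (phB_meas _ _))
      (by rw [x1]; exact i1) (by rw [x2]; exact i2)
    rw [x1, x2, e1] at this
    erw [e2] at this
    change _ ∧ _ = 1/2 * MM ((n:ℝ)/2+γ) (-γ-1) (-γ-1) * B2 γ ε at this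
    exact this
  obtain ⟨i1, e1⟩ := T1
  obtain ⟨i2, e2⟩ := T2
  obtain ⟨i3, e3⟩ := T3
  have pt : ∀ y k : ℝ, 0 < y → y^(3-2*γ) * (k^((n:ℝ)/2) * (S1 γ ε y k)^2) =
      y^(5-2*γ) * (k^((n:ℝ)/2) * (phi (-γ) k * phi (-γ) k * (phA γ ε (k*y^2) * phA γ ε (k*y^2))))
      + 2 * (y^(3-2*γ) * (k^((n:ℝ)/2) * (phi (-γ) k * phi (-γ-1) k * (phA γ ε (k*y^2) * phB γ ε (k*y^2)))))
      + y^(1-2*γ) * (k^((n:ℝ)/2) * (phi (-γ-1) k * phi (-γ-1) k * (phB γ ε (k*y^2) * phB γ ε (k*y^2)))) := by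
    intro y k hy
    have a1 : y^(5-2*γ) = y^(3-2*γ) * y^2 := by
      rw [← rpow_natCast, ← rpow_add hy]; norm_num; ring_nf
    have a2 : y^(3-2*γ) = y^(1-2*γ) * y^2 := by
      rw [← rpow_natCast, ← rpow_add hy]; norm_num; ring_nf
    rw [a1, a2]; unfold S1; field_simp; ring
  have i2' := i2.const_mul 2
  have isum := (i1.add i2').add i3
  have hI : Integrable (fun w : ℝ × ℝ => w.1^(3-2*γ) * (w.2^((n:ℝ)/2) * (S1 γ ε w.1 w.2)^2)) (nuP.prod nuP) := by
    refine isum.congr ?_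
    filter_upwards [ae_nuP2] with w hw
    exact (pt w.1 w.2 hw.1).symm
  refine ⟨hI, ?_⟩
  rw [← integral_prod _ i1] at e1
  rw [← integral_prod _ i2] at e2
  rw [← integral_prod _ i3] at e3
  rw [← integral_prod _ hI]
  have : ∫ w, (fun w : ℝ × ℝ => w.1^(3-2*γ) * (w.2^((n:ℝ)/2) * (S1 γ ε w.1 w.2)^2)) w ∂(nuP.prod nuP) = _ :=
    integral_congr_ae (by
      filter_upwards [ae_nuP2] with w hw
      exact pt w.1 w.2 hw.1)
  refine this.trans ?_
  erw [integral_add (i1.add i2') i3, integral_add i1 i2', integral_const_mul, e1, e2, e3]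
  ring

lemma gam_alg {γ : ℝ} {n : ℕ} (h0 : 0 < γ) (h1 : γ < 1) (hn : 4 + 2*γ < (n:ℝ)) :
    1 / (2 * Gamma ((n:ℝ)/2+1)) * ((1/2) * (MM ((n:ℝ)/2-2+γ) (-γ) (-γ) * A2 γ (-1)
      + 2 * (MM ((n:ℝ)/2-1+γ) (-γ) (-γ-1) * AB γ (-1))
        + MM ((n:ℝ)/2+γ) (-γ-1) (-γ-1) * B2 γ (-1))) =
    ((3+(1-2*γ)) / (20*(n:ℝ)*(3-(1-2*γ))*((n:ℝ)-3))) *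
      (5*(n:ℝ)^3 - 30*(n:ℝ)^2 - ((1-2*γ)^2 + 2*(1-2*γ) - 55)*(n:ℝ) - 2*(1-2*γ)^2 + 16*(1-2*γ) - 30) *
    (1 / Gamma ((n:ℝ)/2) * ((1/2) * MM ((n:ℝ)/2-2+γ) (-γ) (-γ) * MM (2-γ) γ γ)) := by
  obtain ⟨N, hN⟩ : ∃ N : ℝ, (n:ℝ) = 2*N+4 := ⟨(n:ℝ)/2-2, by ring⟩
  rw [hN] at hn ⊢
  have hNγ : γ < N := by linarith
  have gg : ∀ x y : ℝ, x = y → Gamma x = Gamma y := fun x y h => by rw [h]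
  have k1 : MM ((2*N+4)/2-2+γ) (-γ) (-γ) = Gamma (N+γ) * Gamma (N-γ) * Gamma N * Gamma N / Gamma (2*N) := by
    unfold MM; ring_nf
  have r1 : Gamma (N+γ+1) = (N+γ) * Gamma (N+γ) := Gamma_add_one (by linarith)
  have r2 : Gamma (N+γ+1+1) = (N+γ+1) * Gamma (N+γ+1) := Gamma_add_one (by linarith)
  have r3 : Gamma (N+1) = N * Gamma N := Gamma_add_one (by linarith)
  have r4 : Gamma (2*N+1) = (2*N) * Gamma (2*N) := Gamma_add_one (by linarith)
  have r5 : Gamma (2*N+1+1) = (2*N+1) * Gamma (2*N+1) := Gamma_add_one (by linarith)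
  have k2 : MM ((2*N+4)/2-1+γ) (-γ) (-γ-1) =
      Gamma (N+γ+1) * Gamma (N-γ) * Gamma (N+1) * Gamma N / Gamma (2*N+1) := by
    unfold MM; ring_nf
  have k3 : MM ((2*N+4)/2+γ) (-γ-1) (-γ-1) =
      Gamma (N+γ+1+1) * Gamma (N-γ) * Gamma (N+1) * Gamma (N+1) / Gamma (2*N+1+1) := by
    unfold MM; ring_nf
  have q1 : Gamma (1-γ+1) = (1-γ) * Gamma (1-γ) := Gamma_add_one (by linarith)
  have q2 : Gamma (1-γ+1+1) = (1-γ+1) * Gamma (1-γ+1) := Gamma_add_one (by linarith)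
  have q3 : Gamma (1+γ+1) = (1+γ) * Gamma (1+γ) := Gamma_add_one (by linarith)
  have q4 : Gamma (1+γ+1+1) = (1+γ+1) * Gamma (1+γ+1) := Gamma_add_one (by linarith)
  have G2 : Gamma (2:ℝ) = 1 := Gamma_two
  have G3 : Gamma (3:ℝ) = 2 := by
    rw [show (3:ℝ) = 2+1 by norm_num, Gamma_add_one (by norm_num), G2]; norm_num
  have G4 : Gamma (4:ℝ) = 6 := by
    rw [show (4:ℝ) = 3+1 by norm_num, Gamma_add_one (by norm_num), G3]; norm_num
  have G5 : Gamma (5:ℝ) = 24 := by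
    rw [show (5:ℝ) = 4+1 by norm_num, Gamma_add_one (by norm_num), G4]; norm_num
  have G6 : Gamma (6:ℝ) = 120 := by
    rw [show (6:ℝ) = 5+1 by norm_num, Gamma_add_one (by norm_num), G5]; norm_num
  have G1 : Gamma (1:ℝ) = 1 := Gamma_one
  have m0 : MM (2-γ) γ γ = Gamma (1-γ+1) * Gamma (1+γ+1) * Gamma 2 * Gamma 2 / Gamma 4 := by
    unfold MM; ring_nf
  have a11 : MM (3-γ) (γ-1) (γ-1) = Gamma (1-γ+1+1) * Gamma (1+γ) * Gamma 2 * Gamma 2 / Gamma 4 := by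
    unfold MM; ring_nf
  have a12 : MM (3-γ) (γ-1) γ = Gamma (1-γ+1+1) * Gamma (1+γ+1) * Gamma 2 * Gamma 3 / Gamma 5 := by
    unfold MM; ring_nf
  have a21 : MM (3-γ) γ (γ-1) = Gamma (1-γ+1+1) * Gamma (1+γ+1) * Gamma 3 * Gamma 2 / Gamma 5 := by
    unfold MM; ring_nf
  have a22 : MM (3-γ) γ γ = Gamma (1-γ+1+1) * Gamma (1+γ+1+1) * Gamma 3 * Gamma 3 / Gamma 6 := by
    unfold MM; ring_nf
  have b11 : MM (2-γ) (γ-1) γ = Gamma (1-γ+1) * Gamma (1+γ) * Gamma 1 * Gamma 2 / Gamma 3 := by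
    unfold MM; ring_nf
  have b12 : MM (2-γ) (γ-1) (γ+1) = Gamma (1-γ+1) * Gamma (1+γ+1) * Gamma 1 * Gamma 3 / Gamma 4 := by
    unfold MM; ring_nf
  have b22 : MM (2-γ) γ (γ+1) = Gamma (1-γ+1) * Gamma (1+γ+1+1) * Gamma 2 * Gamma 3 / Gamma 5 := by
    unfold MM; ring_nf
  have c11 : MM (1-γ) γ γ = Gamma (1-γ) * Gamma (1+γ) * Gamma 1 * Gamma 1 / Gamma 2 := by
    unfold MM; ring_nf
  have c12 : MM (1-γ) γ (γ+1) = Gamma (1-γ) * Gamma (1+γ+1) * Gamma 1 * Gamma 2 / Gamma 3 := by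
    unfold MM; ring_nf
  have c21 : MM (1-γ) (γ+1) γ = Gamma (1-γ) * Gamma (1+γ+1) * Gamma 2 * Gamma 1 / Gamma 3 := by
    unfold MM; ring_nf
  have c22 : MM (1-γ) (γ+1) (γ+1) = Gamma (1-γ) * Gamma (1+γ+1+1) * Gamma 2 * Gamma 2 / Gamma 4 := by
    unfold MM; ring_nf
  have r6 : Gamma ((2*N+4)/2+1) = ((2*N+4)/2) * Gamma ((2*N+4)/2) := Gamma_add_one (by linarith)
  unfold A2 AB B2
  rw [k1, k2, k3, m0, a11, a12, a21, a22, b11, b12, b22, c11, c12, c21, c22, r6, r5, r4, r3, r2, r1,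
    q4, q3, q2, q1, G1, G2, G3, G4, G5, G6]
  have p1 : Gamma (2*N) ≠ 0 := (Gamma_pos_of_pos (by linarith)).ne'
  have p2 : Gamma ((2*N+4)/2) ≠ 0 := (Gamma_pos_of_pos (by linarith)).ne'
  generalize Gamma ((2*N+4)/2) = g0 at *
  generalize Gamma (2*N) = g1 at *
  generalize Gamma (N+γ) = g2 at *
  generalize Gamma (N-γ) = g3 at *
  generalize Gamma N = g4 at *
  generalize Gamma (1-γ) = g5 at *
  generalize Gamma (1+γ) = g6 at *
  have n1 : N ≠ 0 := by linarith
  have n2 : 2*N+1 ≠ 0 := by linarith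
  have n3 : 2*N+4 ≠ 0 := by linarith
  have n4 : N+2 ≠ 0 := by linarith
  have n5 : 3-(1-2*γ) ≠ 0 := by linarith
  have n6 : 2*N+4-3 ≠ 0 := by linarith
  have n7 : 1+γ ≠ 0 := by linarith
  rw [show 3-(1-2*γ) = 2*(1+γ) by ring, show 2*N+4-3 = 2*N+1 by ring, show (2*N+4)/2 = N+2 by ring,
    show 2*N+4 = 2*(N+2) by ring]
  clear * - p1 p2 n1 n2 n4 n7
  field_simp
  ring

lemma final_I {γ : ℝ} {n : ℕ} (h0 : 0 < γ) (h1 : γ < 1) (hn : 4 + 2*γ < (n:ℝ)) (V : EE n → ℝ → ℝ)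
    (hV : ∀ x y, 0 < y → V x y = CC n γ * ∫ w, F0 γ y w * GG n (TT w) x ∂(nuP.prod nuP)) :
    ∫ y in Ioi (0:ℝ), ∫ x : EE n, y^(3-2*γ) * (V x y)^2 =
      (CC n γ)^2 * π^((n:ℝ)/2) *
        (1 / Gamma ((n:ℝ)/2) * ((1/2) * MM ((n:ℝ)/2-2+γ) (-γ) (-γ) * MM (2-γ) γ γ)) := by
  obtain ⟨i, e⟩ := val0 h0 h1 hn
  have hn0 : 0 < n := by exact_mod_cast (show (0:ℝ) < n by linarith)
  rw [← e, ← mul_assoc, ← integral_const_mul]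
  refine integral_congr_ae ?_
  filter_upwards [ae_nuP, i.prod_right_ae] with y hy hi
  have hyp : 0 < y^(3-2*γ) := rpow_pos_of_pos hy _
  have hi' : Integrable (fun k => k^((n:ℝ)/2-1) * (phi (-γ) k * phi γ (k*y^2))^2) nuP := by
    have := hi.const_mul (y^(3-2*γ))⁻¹
    refine this.congr (Eventually.of_forall fun k => ?_)
    simp only
    rw [← mul_assoc, inv_mul_cancel₀ hyp.ne', one_mul]
  have := inner0 hn0 hy hi'
  simp only [hV _ y hy, mul_pow]
  simp only [integral_const_mul]
  simp only [mul_pow] at this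
  rw [this]
  ring

lemma final_J {γ : ℝ} {n : ℕ} (h0 : 0 < γ) (h1 : γ < 1) (hn : 4 + 2*γ < (n:ℝ)) (i0 : Fin n) (V : EE n → ℝ → ℝ)
    (hV : ∀ x y, 0 < y → V x y = CC n γ * ∫ w, F0 γ y w * GG n (TT w) x ∂(nuP.prod nuP)) :
    ∫ y in Ioi (0:ℝ), ∫ x : EE n, y^(3-2*γ) * (x i0)^2 * (deriv (V x) y)^2 =
      (CC n γ)^2 * π^((n:ℝ)/2) *
        (1 / (2 * Gamma ((n:ℝ)/2+1)) * ((1/2) * (MM ((n:ℝ)/2-2+γ) (-γ) (-γ) * A2 γ (-1)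
      + 2 * (MM ((n:ℝ)/2-1+γ) (-γ) (-γ-1) * AB γ (-1))
        + MM ((n:ℝ)/2+γ) (-γ-1) (-γ-1) * B2 γ (-1)))) := by
  obtain ⟨i, -⟩ := val1 h0 h1 hn 1
  obtain ⟨-, e⟩ := val1 h0 h1 hn (-1)
  have hd : ∀ x y, 0 < y → deriv (V x) y = CC n γ * ∫ w, F1 γ y w * GG n (TT w) x ∂(nuP.prod nuP) := by
    intro x y hy
    have h := (F0_deriv (n := n) h0 (by linarith) hy x).const_mul (CC n γ)
    have ev : V x =ᶠ[𝓝 y] fun y => CC n γ * ∫ w, F0 γ y w * GG n (TT w) x ∂(nuP.prod nuP) := by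
      filter_upwards [lt_mem_nhds hy] with z hz
      exact hV x z hz
    rw [ev.deriv_eq]
    exact h.deriv
  rw [← e, ← mul_assoc, ← integral_const_mul]
  refine integral_congr_ae ?_
  filter_upwards [ae_nuP, i.prod_right_ae] with y hy hi
  have hyp : 0 < y^(3-2*γ) := rpow_pos_of_pos hy _
  have hi' : Integrable (fun k => k^((n:ℝ)/2) * (S1 γ 1 y k)^2) nuP := by
    have := hi.const_mul (y^(3-2*γ))⁻¹
    refine this.congr (Eventually.of_forall fun k => ?_)
    simp only
    rw [← mul_assoc, inv_mul_cancel₀ hyp.ne', one_mul]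
  have := inner1 h0 i0 hy hi'
  have r : ∀ x : EE n, y^(3-2*γ) * (x i0)^2 * (deriv (V x) y)^2 = (y^(3-2*γ) * (CC n γ)^2) *
      ((x i0)^2 * (∫ w, F1 γ y w * GG n (TT w) x ∂(nuP.prod nuP))^2) := by
    intro x; rw [hd x y hy]; ring
  simp only [r]
  simp only [integral_const_mul]
  rw [this]
  ring

end Helpers

open MeasureTheory Real in
theorem stmt_13 (γ : ℝ) (hγ : γ ∈ Set.Ioo (0:ℝ) 1) (a : ℝ) (ha : a = 1 - 2*γ)
    (n : ℕ) (hn : 4 + 2*γ < (n:ℝ))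
    (w : EuclideanSpace ℝ (Fin n) → ℝ)
    (hw : ∀ x : EuclideanSpace ℝ (Fin n), w x = (1 + ‖x‖^2) ^ (-(((n:ℝ) - 2*γ)/2)))
    (U : EuclideanSpace ℝ (Fin n) → ℝ → ℝ)
    (hU : ∀ x : EuclideanSpace ℝ (Fin n), ∀ y : ℝ,
      U x y = ∫ ξ : EuclideanSpace ℝ (Fin n),
        y ^ (2*γ) * (‖x - ξ‖^2 + y^2) ^ (-(((n:ℝ) + 2*γ)/2)) * w ξ) :
    ∫ y in Set.Ioi (0:ℝ), ∫ x : EuclideanSpace ℝ (Fin n),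
      y ^ (a+2) * (x ⟨0, by exact_mod_cast show (0:ℝ) < (n:ℝ) by linarith [hγ.1]⟩)^2 *
        (deriv (U x) y)^2 =
    ((3+a) / (20*(n:ℝ)*(3-a)*((n:ℝ)-3))) *
      (5*(n:ℝ)^3 - 30*(n:ℝ)^2 - (a^2 + 2*a - 55)*(n:ℝ) - 2*a^2 + 16*a - 30) *
      ∫ y in Set.Ioi (0:ℝ), ∫ x : EuclideanSpace ℝ (Fin n), y ^ (a+2) * (U x y)^2 := by
  obtain ⟨h0, h1⟩ := hγ
  subst ha
  have hV : ∀ x y, 0 < y → U x y = CC n γ * ∫ w, F0 γ y w * GG n (TT w) x ∂(nuP.prod nuP) := by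
    intro x y hy
    rw [hU, ← U_repr h0 (by linarith) hy x]
    simp only [hw]
  have e3 : (1 - 2*γ + 2 : ℝ) = 3 - 2*γ := by ring
  rw [e3, final_I h0 h1 hn U hV, final_J h0 h1 hn _ U hV, gam_alg h0 h1 hn]
  ring
end
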